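/- arXiv:1203.0686 — 2 statements merged into one kernel-verified Lean document; each statement's English description precedes it below -/
import Mathlib

section
/- Let A be an analytic subset of a complete separable metric space (X,d) and let k be a positive integer with dimH A > k. Then there exists a compact subset B ⊆ A with 0 < H^k(B) < ∞ together with a metric d' on B satisfying the ultrametric inequality d'(x,y) ≤ max(d'(x,z), d'(z,y)) such that d' is bi-Lipschitz equivalent to d on B, i.e., there are constants 0 < c ≤ C with c · d(x,y) ≤ d'(x,y) ≤ C · d(x,y) for all x,y ∈ B. -/
open MeasureTheory
open scoped ENNReal

/-!
Pick `s` with `t < s < dimH A` and write `A` as a continuous image of Baire space. Inside a piece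
of positive `s`-dimensional content, a maximal ball-sparse family gives finitely many well separated
smaller heavy balls that carry an `s`-dimensional Frostman weight. Region growing discards some of
them so that the rest is gap-separated with a constant independent of the scale, at the cost of a
factor `1 - 1 / m` in the exponent, which is affordable as `t < s`. Iterating inside nested images
of cylinders yields a Cantor set in `A` whose natural mass distribution is `t`-dimensional, so that
`0 < H^t < ∞`, and on a gap-separated set the largest gap separating two points is an ultrametric
comparable to the distance.
-/

section GapSeparation

open Set

/-- A set is gap-separated with constant `c` if any two of its points `x`, `y` are split by a
partition of the set into two parts at distance at least `c * dist x y` from each other. Such sets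
are exactly those on which the metric is bi-Lipschitz equivalent to an ultrametric; the part
containing `x` is encoded as the trace of an arbitrary set `C`. -/
def IsGapSeparated {X : Type*} [PseudoMetricSpace X] (c : ℝ) (S : Set X) : Prop :=
  S.Pairwise fun x y => ∃ C : Set X, x ∈ C ∧ y ∉ C ∧ ∀ a ∈ S ∩ C, ∀ b ∈ S \ C,
    c * dist x y ≤ dist a b

/-- The supremum of the gaps of those partitions of `S` that separate `x` from `y`: the candidate
ultrametric on `S`. As `sSup ∅ = 0`, it vanishes on the diagonal. -/
noncomputable def gapDist {X : Type*} [PseudoMetricSpace X] (S : Set X) (x y : X) : ℝ :=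
  sSup {g | ∃ C : Set X, (x ∈ C ∧ y ∉ C ∨ y ∈ C ∧ x ∉ C) ∧ ∀ a ∈ S ∩ C, ∀ b ∈ S \ C, g ≤ dist a b}

section Pseudo

variable {X Y : Type*} [PseudoMetricSpace X] [PseudoMetricSpace Y] {S T : Set X} {c ℓ : ℝ}
  {x y z : X} {f : X → Y}

theorem IsGapSeparated.mono (hT : IsGapSeparated c T) (hST : S ⊆ T) : IsGapSeparated c S := by
  intro x hx y hy hxy
  obtain ⟨C, hxC, hyC, hgap⟩ := hT (hST hx) (hST hy) hxy
  exact ⟨C, hxC, hyC, fun a ha b hb => hgap a ⟨hST ha.1, ha.2⟩ b ⟨hST hb.1, hb.2⟩⟩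

theorem IsGapSeparated.of_subsingleton (hS : S.Subsingleton) : IsGapSeparated c S :=
  hS.pairwise _

theorem IsGapSeparated.union (hS : IsGapSeparated c S) (hT : IsGapSeparated c T) (hℓ : 0 < ℓ)
    (hgap : ∀ x ∈ S, ∀ y ∈ T, ℓ ≤ dist x y)
    (hdiam : ∀ x ∈ S ∪ T, ∀ y ∈ S ∪ T, c * dist x y ≤ ℓ) : IsGapSeparated c (S ∪ T) := by
  have hdisj : ∀ x ∈ S, x ∉ T := fun x hxS hxT =>
    (hgap x hxS x hxT).not_gt (by rwa [dist_self])
  rintro x (hx | hx) y (hy | hy) hxy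
  · obtain ⟨C, hxC, hyC, hC⟩ := hS hx hy hxy
    refine ⟨C ∩ S, ⟨hxC, hx⟩, fun h => hyC h.1, ?_⟩
    rintro a ⟨-, haC, ha⟩ b ⟨hb | hb, hbC⟩
    · exact hC a ⟨ha, haC⟩ b ⟨hb, fun h => hbC ⟨h, hb⟩⟩
    · exact (hdiam x (.inl hx) y (.inl hy)).trans (hgap a ha b hb)
  · refine ⟨S, hx, fun h => hdisj y h hy, ?_⟩
    rintro a ⟨-, ha⟩ b ⟨hb, hbS⟩
    exact (hdiam x (.inl hx) y (.inr hy)).trans (hgap a ha b (hb.resolve_left hbS))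
  · refine ⟨T, hx, hdisj y hy, ?_⟩
    rintro a ⟨-, ha⟩ b ⟨hb, hbT⟩
    rw [dist_comm a]
    exact (hdiam x (.inr hx) y (.inl hy)).trans (hgap b (hb.resolve_right hbT) a ha)
  · obtain ⟨C, hxC, hyC, hC⟩ := hT hx hy hxy
    refine ⟨C ∩ T, ⟨hxC, hx⟩, fun h => hyC h.1, ?_⟩
    rintro a ⟨-, haC, ha⟩ b ⟨hb | hb, hbC⟩
    · rw [dist_comm a]
      exact (hdiam x (.inr hx) y (.inr hy)).trans (hgap b hb a ha)
    · exact hC a ⟨ha, haC⟩ b ⟨hb, fun h => hbC ⟨h, hb⟩⟩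

theorem gapDist_self : gapDist S x x = 0 := by
  have hempty : {g : ℝ | ∃ C : Set X, (x ∈ C ∧ x ∉ C ∨ x ∈ C ∧ x ∉ C) ∧
      ∀ a ∈ S ∩ C, ∀ b ∈ S \ C, g ≤ dist a b} = ∅ :=
    eq_empty_of_forall_notMem fun g ⟨C, h, _⟩ => by tauto
  rw [gapDist, hempty, Real.sSup_empty]

theorem gapDist_comm : gapDist S x y = gapDist S y x := by
  simp only [gapDist, or_comm (a := x ∈ _ ∧ _)]

theorem gapDist_nonneg : 0 ≤ gapDist S x y := by
  by_cases hxy : x = y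
  · rw [hxy, gapDist_self]
  · exact Real.sSup_nonneg' ⟨0, ⟨{x}, .inl ⟨rfl, Ne.symm hxy⟩, fun _ _ _ _ => dist_nonneg⟩, le_rfl⟩

theorem gap_le_dist {C : Set X} {g : ℝ} (hx : x ∈ S) (hy : y ∈ S)
    (hC : x ∈ C ∧ y ∉ C ∨ y ∈ C ∧ x ∉ C) (hg : ∀ a ∈ S ∩ C, ∀ b ∈ S \ C, g ≤ dist a b) :
    g ≤ dist x y := by
  rcases hC with h | h
  · exact hg x ⟨hx, h.1⟩ y ⟨hy, h.2⟩
  · rw [dist_comm]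
    exact hg y ⟨hy, h.1⟩ x ⟨hx, h.2⟩

theorem gapDist_le_dist (hx : x ∈ S) (hy : y ∈ S) : gapDist S x y ≤ dist x y :=
  Real.sSup_le (fun _ ⟨_, hC, hg⟩ => gap_le_dist hx hy hC hg) dist_nonneg

theorem le_gapDist {C : Set X} {g : ℝ} (hx : x ∈ S) (hy : y ∈ S)
    (hC : x ∈ C ∧ y ∉ C ∨ y ∈ C ∧ x ∉ C) (hg : ∀ a ∈ S ∩ C, ∀ b ∈ S \ C, g ≤ dist a b) :
    g ≤ gapDist S x y :=
  le_csSup ⟨dist x y, fun _ ⟨_, hC, hg⟩ => gap_le_dist hx hy hC hg⟩ ⟨C, hC, hg⟩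

theorem gapDist_le_max (hx : x ∈ S) (hy : y ∈ S) (hz : z ∈ S) :
    gapDist S x y ≤ max (gapDist S x z) (gapDist S z y) := by
  refine Real.sSup_le (fun g ⟨C, hC, hg⟩ => ?_) (le_max_of_le_left gapDist_nonneg)
  by_cases hxz : x ∈ C ∧ z ∉ C ∨ z ∈ C ∧ x ∉ C
  · exact le_max_of_le_left (le_gapDist hx hz hxz hg)
  · exact le_max_of_le_right (le_gapDist hz hy (by tauto) hg)

theorem IsGapSeparated.mul_dist_le_gapDist (hS : IsGapSeparated c S) (hx : x ∈ S) (hy : y ∈ S) :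
    c * dist x y ≤ gapDist S x y := by
  by_cases hxy : x = y
  · simp [hxy, gapDist_self]
  · obtain ⟨C, hxC, hyC, hC⟩ := hS hx hy hxy
    exact le_gapDist hx hy (.inl ⟨hxC, hyC⟩) hC

theorem IsGapSeparated.preimage {S : Set Y} (hf : Isometry f) (hinj : f.Injective)
    (hS : IsGapSeparated c S) : IsGapSeparated c (f ⁻¹' S) := by
  intro x hx y hy hxy
  obtain ⟨C, hxC, hyC, hC⟩ := hS hx hy (hinj.ne hxy)
  refine ⟨f ⁻¹' C, hxC, hyC, fun a ha b hb => ?_⟩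
  rw [← hf.dist_eq x, ← hf.dist_eq a]
  exact hC (f a) ha (f b) hb

theorem IsGapSeparated.image (hf : Isometry f) (hinj : f.Injective) (hS : IsGapSeparated c S) :
    IsGapSeparated c (f '' S) := by
  rintro _ ⟨x, hx, rfl⟩ _ ⟨y, hy, rfl⟩ hxy
  obtain ⟨C, hxC, hyC, hC⟩ := hS hx hy (ne_of_apply_ne f hxy)
  refine ⟨f '' C, mem_image_of_mem f hxC, hinj.mem_set_image.not.2 hyC, ?_⟩
  rintro _ ⟨⟨a, ha, rfl⟩, haC⟩ _ ⟨⟨b, hb, rfl⟩, hbC⟩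
  rw [hf.dist_eq, hf.dist_eq]
  exact hC a ⟨ha, hinj.mem_set_image.1 haC⟩ b ⟨hb, hinj.mem_set_image.not.1 hbC⟩

end Pseudo

theorem IsGapSeparated.exists_biLipschitz_ultrametric {X : Type*} [MetricSpace X] {S : Set X}
    {c : ℝ} (hS : IsGapSeparated c S) (hc : 0 < c) :
    ∃ d' : X → X → ℝ,
      (∀ x ∈ S, d' x x = 0) ∧
      (∀ x ∈ S, ∀ y ∈ S, d' x y = d' y x) ∧
      (∀ x ∈ S, ∀ y ∈ S, x ≠ y → 0 < d' x y) ∧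
      (∀ x ∈ S, ∀ y ∈ S, ∀ z ∈ S, d' x y ≤ max (d' x z) (d' z y)) ∧
      ∃ c C : ℝ, 0 < c ∧ c ≤ C ∧
        ∀ x ∈ S, ∀ y ∈ S, c * dist x y ≤ d' x y ∧ d' x y ≤ C * dist x y := by
  refine ⟨gapDist S, fun x _ => gapDist_self, fun x _ y _ => gapDist_comm,
    fun x hx y hy hxy => ?_, fun x hx y hy z hz => gapDist_le_max hx hy hz,
    c, max c 1, hc, le_max_left c 1, fun x hx y hy => ⟨hS.mul_dist_le_gapDist hx hy, ?_⟩⟩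
  · exact (mul_pos hc (dist_pos.2 hxy)).trans_le (hS.mul_dist_le_gapDist hx hy)
  · exact (gapDist_le_dist hx hy).trans (le_mul_of_one_le_left dist_nonneg (le_max_right c 1))

end GapSeparation

section Content

open Set

section PseudoEMetric

variable {X : Type*} [PseudoEMetricSpace X] {s : ℝ} {U E : Set X}

/-- The `s`-dimensional Hausdorff content: the infimum of `∑ ediam (U n) ^ s` over all countable
covers, with no bound on the diameters of the covering sets. -/
noncomputable def hausdorffContent (X : Type*) [PseudoEMetricSpace X] (s : ℝ) : OuterMeasure X :=
  OuterMeasure.boundedBy fun U => Metric.ediam U ^ s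

theorem hausdorffContent_le_ediam_rpow : hausdorffContent X s U ≤ Metric.ediam U ^ s :=
  OuterMeasure.boundedBy_le U

theorem nonempty_of_hausdorffContent_ne_zero (h : hausdorffContent X s E ≠ 0) : E.Nonempty :=
  nonempty_iff_ne_empty.2 fun hE => h (hE ▸ measure_empty)

theorem exists_cover_of_hausdorffContent_lt (hs : 0 < s) {c : ℝ≥0∞}
    (h : hausdorffContent X s E < c) :
    ∃ U : ℕ → Set X, E ⊆ ⋃ n, U n ∧ ∑' n, Metric.ediam (U n) ^ s < c := by
  rw [hausdorffContent, OuterMeasure.boundedBy_apply] at h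
  simp only [iInf_lt_iff] at h
  obtain ⟨U, hU, h⟩ := h
  refine ⟨U, hU, lt_of_eq_of_lt (tsum_congr fun n => ?_) h⟩
  rcases (U n).eq_empty_or_nonempty with hempty | hne
  · simp [hempty, hs]
  · simp [hne]

end PseudoEMetric

section EMetric

variable {X : Type*} [EMetricSpace X] [MeasurableSpace X] [BorelSpace X] {s : ℝ} {E : Set X}

theorem hausdorffContent_le_hausdorffMeasure : hausdorffContent X s E ≤ μH[s] E := by
  rw [Measure.hausdorffMeasure_apply, hausdorffContent, OuterMeasure.boundedBy_apply]
  refine le_iSup₂_of_le 1 one_pos (iInf₂_mono fun U _ => le_iInf fun _ => le_rfl)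

theorem hausdorffMeasure_eq_zero_of_hausdorffContent_eq_zero (hs : 0 < s)
    (hE : hausdorffContent X s E = 0) : μH[s] E = 0 := by
  simp only [Measure.hausdorffMeasure_apply, ENNReal.iSup_eq_zero]
  intro r hr
  rw [← nonpos_iff_eq_zero]
  refine le_of_forall_gt fun ε hε => ?_
  have hrs : 0 < r ^ s := ENNReal.rpow_pos_of_nonneg hr hs.le
  obtain ⟨U, hEU, hU⟩ := exists_cover_of_hausdorffContent_lt hs (hE ▸ lt_min hε hrs)
  have hdiam (n : ℕ) : Metric.ediam (U n) ≤ r :=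
    (ENNReal.rpow_le_rpow_iff hs).1
      ((ENNReal.le_tsum n).trans (hU.le.trans (min_le_right ε (r ^ s))))
  refine lt_of_le_of_lt ?_ (hU.trans_le (min_le_left _ _))
  exact iInf_le_of_le U (iInf_le_of_le hEU (iInf_le_of_le hdiam
    (ENNReal.tsum_le_tsum fun n => iSup_le fun _ => le_rfl)))

end EMetric

section Metric

variable {X : Type*} [PseudoMetricSpace X] {s ρ₀ : ℝ} {E : Set X}

theorem hausdorffContent_closedBall_le (hs : 0 < s) (x : X) {ρ : ℝ} (hρ : 0 ≤ ρ) :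
    hausdorffContent X s (Metric.closedBall x ρ) ≤ ENNReal.ofReal ((2 * ρ) ^ s) := by
  refine hausdorffContent_le_ediam_rpow.trans ?_
  rw [← ENNReal.ofReal_rpow_of_nonneg (by positivity) hs.le]
  gcongr
  rw [ENNReal.ofReal_mul zero_le_two, ENNReal.ofReal_ofNat, ← Metric.closedEBall_ofReal hρ]
  exact Metric.ediam_closedEBall_le

theorem hausdorffContent_inter_le_of_light (hs : 0 < s) (hρ₀ : 0 < ρ₀)
    (hE : ∀ x ∈ E, ∀ ρ, 0 < ρ → ρ ≤ ρ₀ →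
      hausdorffContent X s (E ∩ Metric.closedBall x ρ) ≤ ENNReal.ofReal (ρ ^ s / 4))
    {U : Set X} (hU : Metric.ediam U ≤ ENNReal.ofReal ρ₀) :
    hausdorffContent X s (U ∩ E) ≤ Metric.ediam U ^ s / 4 := by
  rcases (U ∩ E).eq_empty_or_nonempty with hempty | ⟨y, hyU, hyE⟩
  · simp [hempty]
  rcases eq_or_ne (Metric.ediam U) 0 with hzero | hpos
  · refine (measure_mono inter_subset_left).trans (hausdorffContent_le_ediam_rpow.trans ?_)
    simp [hzero, hs]
  obtain ⟨d, hd, hUd⟩ : ∃ d : ℝ, 0 < d ∧ Metric.ediam U = ENNReal.ofReal d :=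
    have htop : Metric.ediam U ≠ ⊤ := ne_top_of_le_ne_top ENNReal.ofReal_ne_top hU
    ⟨_, ENNReal.toReal_pos hpos htop, (ENNReal.ofReal_toReal htop).symm⟩
  have hball : U ∩ E ⊆ E ∩ Metric.closedBall y d := fun z hz => ⟨hz.2, by
    rw [← Metric.closedEBall_ofReal hd.le, ← hUd]
    exact Metric.edist_le_ediam_of_mem hz.1 hyU⟩
  calc hausdorffContent X s (U ∩ E) ≤ ENNReal.ofReal (d ^ s / 4) :=
        (measure_mono hball).trans (hE y hyE d hd
          ((ENNReal.ofReal_le_ofReal_iff hρ₀.le).1 (hUd ▸ hU)))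
    _ = Metric.ediam U ^ s / 4 := by
        rw [hUd, ENNReal.ofReal_rpow_of_pos hd, ENNReal.ofReal_div_of_pos four_pos,
          ENNReal.ofReal_ofNat]

/-- An almost optimal cover of `F` consists of sets whose traces on `F` lose a factor `4`. -/
theorem hausdorffContent_eq_zero_of_light_of_lt (hs : 0 < s) (hρ₀ : 0 < ρ₀)
    (hE : ∀ x ∈ E, ∀ ρ, 0 < ρ → ρ ≤ ρ₀ →
      hausdorffContent X s (E ∩ Metric.closedBall x ρ) ≤ ENNReal.ofReal (ρ ^ s / 4))
    {F : Set X} (hFE : F ⊆ E) (hF : hausdorffContent X s F < ENNReal.ofReal (ρ₀ ^ s)) :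
    hausdorffContent X s F = 0 := by
  set c := hausdorffContent X s F
  have htop : c ≠ ⊤ := hF.ne_top
  suffices h : c * 4 ≤ c by
    by_contra hpos
    have hlt : c < c * 2 := mul_two c ▸ ENNReal.lt_add_right htop hpos
    exact h.not_gt (hlt.trans_le (by gcongr; norm_num))
  refine le_of_forall_gt_imp_ge_of_dense fun ε hε => ?_
  obtain ⟨U, hFU, hU⟩ := exists_cover_of_hausdorffContent_lt hs (lt_min hε hF)
  have hdiam (n : ℕ) : Metric.ediam (U n) ≤ ENNReal.ofReal ρ₀ := by
    rw [← ENNReal.rpow_le_rpow_iff hs, ENNReal.ofReal_rpow_of_pos hρ₀]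
    exact (ENNReal.le_tsum n).trans (hU.le.trans (min_le_right _ _))
  rw [← ENNReal.le_div_iff_mul_le (by simp) (by simp)]
  calc c ≤ ∑' n, hausdorffContent X s (U n ∩ E) := by
        refine (measure_mono ?_).trans (measure_iUnion_le fun n => U n ∩ E)
        rw [← iUnion_inter]
        exact subset_inter hFU hFE
    _ ≤ ∑' n, Metric.ediam (U n) ^ s / 4 :=
        ENNReal.tsum_le_tsum fun n => hausdorffContent_inter_le_of_light hs hρ₀ hE (hdiam n)
    _ = (∑' n, Metric.ediam (U n) ^ s) / 4 := by
        simp only [div_eq_mul_inv, ENNReal.tsum_mul_right]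
    _ ≤ ε / 4 := by
        gcongr
        exact hU.le.trans (min_le_left _ _)

theorem hausdorffContent_eq_zero_of_light [TopologicalSpace.SeparableSpace X] (hs : 0 < s)
    (hρ₀ : 0 < ρ₀)
    (hE : ∀ x ∈ E, ∀ ρ, 0 < ρ → ρ ≤ ρ₀ →
      hausdorffContent X s (E ∩ Metric.closedBall x ρ) ≤ ENNReal.ofReal (ρ ^ s / 4)) :
    hausdorffContent X s E = 0 := by
  have : SecondCountableTopology X := UniformSpace.secondCountable_of_separable X
  refine measure_null_of_locally_null E fun x hx => ⟨E ∩ Metric.closedBall x ρ₀, ?_, ?_⟩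
  · exact Filter.inter_mem self_mem_nhdsWithin
      (mem_nhdsWithin_of_mem_nhds (Metric.closedBall_mem_nhds x hρ₀))
  · refine hausdorffContent_eq_zero_of_light_of_lt hs hρ₀ hE inter_subset_left ?_
    refine (hE x hx ρ₀ hρ₀ le_rfl).trans_lt ((ENNReal.ofReal_lt_ofReal_iff ?_).2 ?_)
    · positivity
    · linarith [Real.rpow_pos_of_pos hρ₀ s]

theorem hausdorffContent_le_heavyPoints [TopologicalSpace.SeparableSpace X] {ι : Type*}
    [Countable ι] (hs : 0 < s) (hρ₀ : 0 < ρ₀) {Q : ι → Set X} (hQ : E ⊆ ⋃ i, Q i) :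
    hausdorffContent X s E ≤ hausdorffContent X s {x ∈ E | ∃ i ρ, 0 < ρ ∧ ρ ≤ ρ₀ ∧
      ENNReal.ofReal (ρ ^ s / 4) ≤
        hausdorffContent X s (E ∩ Q i ∩ Metric.closedBall x ρ)} := by
  set H := {x ∈ E | ∃ i ρ, 0 < ρ ∧ ρ ≤ ρ₀ ∧
    ENNReal.ofReal (ρ ^ s / 4) ≤ hausdorffContent X s (E ∩ Q i ∩ Metric.closedBall x ρ)}
  have hlight (i : ι) : hausdorffContent X s ((E \ H) ∩ Q i) = 0 := by
    refine hausdorffContent_eq_zero_of_light hs hρ₀ fun x hx ρ hρ hρρ₀ => ?_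
    have hxρ := lt_of_not_ge fun h => hx.1.2 ⟨hx.1.1, i, ρ, hρ, hρρ₀, h⟩
    refine (measure_mono ?_).trans hxρ.le
    gcongr
    exact sdiff_subset
  have hnull : hausdorffContent X s (E \ H) = 0 := by
    refine measure_mono_null ?_ (measure_iUnion_null hlight)
    rw [← inter_iUnion]
    exact subset_inter Subset.rfl (sdiff_subset.trans hQ)
  calc hausdorffContent X s E ≤ hausdorffContent X s (H ∪ E \ H) := measure_mono (by simp)
    _ ≤ hausdorffContent X s H + hausdorffContent X s (E \ H) := measure_union_le _ _
    _ = hausdorffContent X s H := by rw [hnull, add_zero]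

theorem hausdorffContent_biUnion_closedBall_le {ι : Type*} (hs : 0 < s) {J : Set ι}
    (hJ : J.Countable) (x : ι → X) {g : ι → ℝ} (hg : ∀ j ∈ J, 0 ≤ g j) {M l : ℝ} (hl : 0 ≤ l)
    (hM : ∀ F : Finset ι, (F : Set ι) ⊆ J → ∑ j ∈ F, g j ^ s ≤ M) :
    hausdorffContent X s (⋃ j ∈ J, Metric.closedBall (x j) (l * g j)) ≤
      ENNReal.ofReal ((2 * l) ^ s * M) := by
  refine (measure_biUnion_le _ hJ _).trans ?_
  rw [ENNReal.tsum_eq_iSup_sum]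
  refine iSup_le fun F => ?_
  have hball (j : J) : hausdorffContent X s (Metric.closedBall (x j) (l * g j)) ≤
      ENNReal.ofReal ((2 * l) ^ s * g j ^ s) := by
    have hgj := hg j j.2
    rw [← Real.mul_rpow (by positivity) hgj, mul_assoc]
    exact hausdorffContent_closedBall_le hs _ (by positivity)
  have hnonneg : ∀ j ∈ F, 0 ≤ (2 * l) ^ s * g j ^ s := fun j _ => by
    have hgj := hg j j.2
    positivity
  have hsum : ∑ j ∈ F, g j ^ s ≤ M := by
    simpa only [Finset.sum_map, Function.Embedding.subtype_apply]
      using hM (F.map (Function.Embedding.subtype _)) (by simp)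
  calc ∑ j ∈ F, hausdorffContent X s (Metric.closedBall (x j) (l * g j))
      ≤ ∑ j ∈ F, ENNReal.ofReal ((2 * l) ^ s * g j ^ s) := Finset.sum_le_sum fun j _ => hball j
    _ = ENNReal.ofReal ((2 * l) ^ s * ∑ j ∈ F, g j ^ s) := by
        rw [← ENNReal.ofReal_sum_of_nonneg hnonneg, Finset.mul_sum]
    _ ≤ ENNReal.ofReal ((2 * l) ^ s * M) := by gcongr

end Metric

end Content

section BallSparse

open Set

/-- The packing condition of the construction: the `t`-th powers of the radii `r j ≤ u`, over
indices `j ∈ J` with `x j` in a ball of radius `u`, add up to at most `L * u ^ t`. -/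
def BallSparse {ι X : Type*} [PseudoMetricSpace X] (x : ι → X) (r : ι → ℝ) (t L : ℝ)
    (J : Set ι) : Prop :=
  ∀ (y : X) (u : ℝ), 0 < u → ∀ F : Finset ι, (F : Set ι) ⊆ J →
    (∀ j ∈ F, dist (x j) y ≤ u ∧ r j ≤ u) → ∑ j ∈ F, r j ^ t ≤ L * u ^ t

variable {ι X : Type*} [PseudoMetricSpace X] {x : ι → X} {r : ι → ℝ} {t L M : ℝ} {I J : Set ι}

theorem BallSparse.mono {J' : Set ι} (h : BallSparse x r t L J) (hJ : J' ⊆ J) :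
    BallSparse x r t L J' :=
  fun y u hu F hF => h y u hu F (hF.trans hJ)

theorem BallSparse.of_injOn {κ : Type*} {x' : κ → X} {r' : κ → ℝ} {K : Set κ}
    (h : BallSparse x r t L J) (φ : κ → ι) (hφ : Set.MapsTo φ K J) (hinj : Set.InjOn φ K)
    (hx : ∀ k ∈ K, x' k = x (φ k)) (hr : ∀ k ∈ K, r' k = r (φ k)) :
    BallSparse x' r' t L K := by
  classical
  intro y u hu F hF hFu
  have hsum : ∑ j ∈ F.image φ, r j ^ t = ∑ k ∈ F, r' k ^ t := by
    rw [Finset.sum_image (hinj.mono hF)]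
    exact Finset.sum_congr rfl fun k hk => by rw [hr k (hF hk)]
  rw [← hsum]
  refine h y u hu _ (by simpa using (hφ.mono_left hF).image_subset) ?_
  simp only [Finset.forall_mem_image]
  intro k hk
  rw [← hx k (hF hk), ← hr k (hF hk)]
  exact hFu k hk

theorem BallSparse.sUnion {c : Set (Set ι)} (hc : IsChain (· ⊆ ·) c) (hne : c.Nonempty)
    (hsparse : ∀ J ∈ c, BallSparse x r t L J) : BallSparse x r t L (⋃₀ c) := by
  intro y u hu F hF h
  obtain ⟨J, hJ, hFJ⟩ := DirectedOn.exists_mem_subset_of_finset_subset_biUnion (f := id) hne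
    hc.directedOn (s := F) (by simpa [sUnion_eq_biUnion] using hF)
  exact hsparse J hJ y u hu F hFJ h

theorem BallSparse.empty (hL : 0 ≤ L) : BallSparse x r t L (∅ : Set ι) := by
  intro y u hu F hF _
  rw [subset_empty_iff, Finset.coe_eq_empty] at hF
  rw [hF, Finset.sum_empty]
  positivity

theorem exists_maximal_ballSparse (x : ι → X) (r : ι → ℝ) (t : ℝ) (hL : 0 ≤ L) (I : Set ι) :
    ∃ J, Maximal (fun J => J ⊆ I ∧ BallSparse x r t L J) J := by
  refine zorn_subset {J | J ⊆ I ∧ BallSparse x r t L J} fun c hc hchain => ?_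
  rcases c.eq_empty_or_nonempty with rfl | hne
  · exact ⟨∅, ⟨empty_subset I, BallSparse.empty hL⟩, by simp⟩
  · exact ⟨⋃₀ c, ⟨sUnion_subset fun J hJ => (hc hJ).1,
      BallSparse.sUnion hchain hne fun J hJ => (hc hJ).2⟩, fun J hJ => subset_sUnion_of_mem hJ⟩

/-- An index outside a maximal sparse set is blocked by a ball in which the set already carries
almost all of the mass that is allowed there. -/
theorem exists_saturated_ball_of_maximal (hr : ∀ i ∈ I, 0 < r i) (ht : 0 < t)
    (hJ : Maximal (fun J => J ⊆ I ∧ BallSparse x r t L J) J) {i : ι} (hi : i ∈ I \ J) :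
    ∃ (u : ℝ) (F : Finset ι), 0 < u ∧ r i ≤ u ∧ (F : Set ι) ⊆ J ∧
      (∀ j ∈ F, dist (x j) (x i) ≤ 2 * u) ∧ (L - 1) * u ^ t ≤ ∑ j ∈ F, r j ^ t := by
  classical
  obtain ⟨hJI, hJsparse⟩ := hJ.prop
  have hnot : ¬ BallSparse x r t L (insert i J) := fun h =>
    hi.2 (hJ.le_of_ge ⟨insert_subset hi.1 hJI, h⟩ (subset_insert _ _) (mem_insert _ _))
  unfold BallSparse at hnot
  push Not at hnot
  obtain ⟨y, u, hu, F, hFJ, hF, hlt⟩ := hnot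
  have hiF : i ∈ F := by
    by_contra hiF
    rw [subset_insert_iff_of_notMem (by simpa using hiF)] at hFJ
    exact (hJsparse y u hu F hFJ hF).not_gt hlt
  have hri : r i ^ t ≤ u ^ t := Real.rpow_le_rpow (hr i hi.1).le (hF i hiF).2 ht.le
  refine ⟨u, F.erase i, hu, (hF i hiF).2, ?_, fun j hj => ?_, ?_⟩
  · rwa [Finset.coe_erase, sdiff_singleton_subset_iff]
  · linarith [(hF i hiF).1, (hF j (Finset.mem_of_mem_erase hj)).1,
      dist_triangle_right (x j) (x i) y]
  · linarith [Finset.add_sum_erase F (fun j => r j ^ t) hiF]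

/-- The saturated balls blocking the rejected indices are thinned out by Vitali's covering lemma;
the remaining ones are disjoint, so that their total mass is controlled by that of `J`. -/
theorem exists_saturated_cover_of_maximal (hr : ∀ i ∈ I, 0 < r i) (ht : 0 < t) (hL : 1 < L)
    (hJ : Maximal (fun J => J ⊆ I ∧ BallSparse x r t L J) J)
    (hM : ∀ F : Finset ι, (F : Set ι) ⊆ J → ∑ j ∈ F, r j ^ t ≤ M) :
    ∃ (Q : Set ι) (u : ι → ℝ), Q ⊆ I ∧ (∀ b ∈ Q, r b ≤ u b) ∧
      (∀ F : Finset ι, (F : Set ι) ⊆ Q → ∑ b ∈ F, u b ^ t ≤ M / (L - 1)) ∧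
      ∀ i ∈ I \ J, ∃ b ∈ Q, dist (x i) (x b) ≤ 6 * u b ∧ r i ≤ 2 * u b := by
  classical
  choose! u F hu hru hFJ hFx hsum using
    fun i => exists_saturated_ball_of_maximal (i := i) hr ht hJ
  have hL' : 0 < L - 1 := sub_pos.2 hL
  have hbound : ∀ i ∈ I \ J, u i ≤ (M / (L - 1)) ^ t⁻¹ := fun i hi => by
    rw [Real.le_rpow_inv_iff_of_pos (hu i hi).le _ ht, le_div_iff₀' hL']
    · exact (hsum i hi).trans (hM _ (hFJ i hi))
    · exact div_nonneg (by simpa using hM ∅ (by simp)) hL'.le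
  obtain ⟨Q, hQ, hdisj, hcov⟩ := Vitali.exists_disjoint_subfamily_covering_enlargement
    (fun i => Metric.closedBall (x i) (2 * u i)) (I \ J) u 2 one_lt_two (fun i hi => (hu i hi).le)
    _ hbound fun i hi => ⟨x i, Metric.mem_closedBall_self (mul_pos two_pos (hu i hi)).le⟩
  refine ⟨Q, u, fun i hi => (hQ hi).1, fun b hb => hru b (hQ hb), fun G hG => ?_, fun i hi => ?_⟩
  · have hFdisj : (G : Set ι).PairwiseDisjoint F := fun a ha b hb hab =>
      Finset.disjoint_left.2 fun j hja hjb => disjoint_left.1 (hdisj (hG ha) (hG hb) hab)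
        (hFx a (hQ (hG ha)) j hja) (hFx b (hQ (hG hb)) j hjb)
    rw [le_div_iff₀' hL']
    calc (L - 1) * ∑ b ∈ G, u b ^ t ≤ ∑ b ∈ G, ∑ j ∈ F b, r j ^ t := by
          rw [Finset.mul_sum]
          exact Finset.sum_le_sum fun b hb => hsum b (hQ (hG hb))
      _ = ∑ j ∈ G.biUnion F, r j ^ t := (Finset.sum_biUnion hFdisj).symm
      _ ≤ M := hM _ <| by
          simpa only [Finset.coe_biUnion, iUnion_subset_iff] using fun b hb => hFJ b (hQ (hG hb))
  · obtain ⟨b, hb, ⟨z, hzi, hzb⟩, hub⟩ := hcov i hi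
    refine ⟨b, hb, ?_, (hru i hi).trans hub⟩
    rw [Metric.mem_closedBall] at hzi hzb
    linarith [dist_triangle_left (x i) (x b) z]

theorem exists_countable_separated_cover [TopologicalSpace.SeparableSpace X] {T : Set X}
    {ρ : X → ℝ} {ρ₀ : ℝ} (hρ : ∀ p ∈ T, 0 < ρ p) (hρρ₀ : ∀ p ∈ T, ρ p ≤ ρ₀) :
    ∃ I ⊆ T, I.Countable ∧ I.Pairwise (fun i j => 4 * ρ i < dist i j) ∧
      ∀ p ∈ T, ∃ i ∈ I, dist p i ≤ 12 * ρ i := by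
  have hcenter (p : X) (hp : p ∈ T) : p ∈ Metric.ball p (4 * ρ p) :=
    Metric.mem_ball_self (mul_pos four_pos (hρ p hp))
  obtain ⟨I, hIT, hdisj, hcov⟩ := Vitali.exists_disjoint_subfamily_covering_enlargement
    (fun i => Metric.closedBall i (4 * ρ i)) T ρ 2 one_lt_two (fun p hp => (hρ p hp).le) ρ₀ hρρ₀
    fun p hp => ⟨p, Metric.ball_subset_closedBall (hcenter p hp)⟩
  refine ⟨I, hIT, hdisj.countable_of_nonempty_interior fun i hi =>
    ⟨i, Metric.ball_subset_interior_closedBall (hcenter i (hIT hi))⟩, fun i hi j hj hij => ?_,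
    fun p hp => ?_⟩
  · by_contra! hle
    exact disjoint_left.1 (hdisj hi hj hij) (Metric.mem_closedBall'.2 hle)
      (Metric.ball_subset_closedBall (hcenter j (hIT hj)))
  · obtain ⟨i, hi, ⟨z, hzp, hzi⟩, hpi⟩ := hcov p hp
    rw [Metric.mem_closedBall] at hzp hzi
    exact ⟨i, hi, by linarith [dist_triangle_left p i z]⟩

/-- If every sparse family had small mass, then the balls of a maximal one, together with the
saturated balls blocking the rejected points, would form too cheap a cover of `T`. -/
theorem exists_separated_ballSparse_of_lt_hausdorffContent [TopologicalSpace.SeparableSpace X]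
    {s : ℝ} (hs : 0 < s) {T : Set X} {ρ : X → ℝ} {ρ₀ : ℝ} (hρ : ∀ p ∈ T, 0 < ρ p)
    (hρρ₀ : ∀ p ∈ T, ρ p ≤ ρ₀)
    (hM : ENNReal.ofReal ((24 ^ s + 60 ^ s) * M) < hausdorffContent X s T) :
    ∃ J : Finset X, (J : Set X) ⊆ T ∧ (J : Set X).Pairwise (fun i j => 4 * ρ i < dist i j) ∧
      BallSparse id ρ s 2 (J : Set X) ∧ M < ∑ j ∈ J, ρ j ^ s := by
  obtain ⟨I, hIT, hIcount, hIsep, hIcov⟩ := exists_countable_separated_cover hρ hρρ₀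
  obtain ⟨J, hJ⟩ := exists_maximal_ballSparse id ρ s zero_le_two I
  obtain ⟨hJI, hJsparse⟩ := hJ.prop
  suffices h : ∃ F : Finset X, (F : Set X) ⊆ J ∧ M < ∑ j ∈ F, ρ j ^ s by
    obtain ⟨F, hFJ, hF⟩ := h
    exact ⟨F, hFJ.trans (hJI.trans hIT), hIsep.mono (hFJ.trans hJI), hJsparse.mono hFJ, hF⟩
  by_contra! hsmall
  have hM₀ : 0 ≤ M := by simpa using hsmall ∅ (by simp)
  obtain ⟨B, u, hBI, hρu, hB, hBcov⟩ := exists_saturated_cover_of_maximal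
    (fun i hi => hρ i (hIT hi)) hs one_lt_two hJ hsmall
  have hcov : T ⊆ (⋃ j ∈ J, Metric.closedBall j (12 * ρ j)) ∪
      ⋃ b ∈ B, Metric.closedBall b (30 * u b) := by
    intro p hp
    obtain ⟨i, hi, hpi⟩ := hIcov p hp
    by_cases hiJ : i ∈ J
    · exact .inl (mem_iUnion₂.2 ⟨i, hiJ, hpi⟩)
    · obtain ⟨b, hb, hib, hρib⟩ := hBcov i ⟨hi, hiJ⟩
      simp only [id_eq] at hib
      exact .inr (mem_iUnion₂.2 ⟨b, hb,
        Metric.mem_closedBall.2 (by linarith [dist_triangle p i b])⟩)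
  have hJcontent := hausdorffContent_biUnion_closedBall_le hs (hIcount.mono hJI) id
    (fun j hj => (hρ j (hIT (hJI hj))).le) (by norm_num : (0 : ℝ) ≤ 12) hsmall
  have hBcontent := hausdorffContent_biUnion_closedBall_le hs (hIcount.mono hBI) id
    (fun b hb => (hρ b (hIT (hBI hb))).le.trans (hρu b hb)) (by norm_num : (0 : ℝ) ≤ 30) hB
  refine hM.not_ge ((measure_mono hcov).trans ((measure_union_le _ _).trans
    ((add_le_add hJcontent hBcontent).trans_eq ?_)))
  rw [← ENNReal.ofReal_add (by positivity) (by positivity)]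
  norm_num [add_mul]

theorem exists_heavy_separated_ballSparse [TopologicalSpace.SeparableSpace X] {κ : Type*}
    [Countable κ] [Nonempty κ] {s : ℝ} (hs : 0 < s) {ρ₀ : ℝ} (hρ₀ : 0 < ρ₀) {P : Set X}
    {Q : κ → Set X} (hQ : P ⊆ ⋃ a, Q a)
    (hM : ENNReal.ofReal ((24 ^ s + 60 ^ s) * M) < hausdorffContent X s P) :
    ∃ (ρ : X → ℝ) (α : X → κ) (J : Finset X),
      (∀ j ∈ J, 0 < ρ j ∧ ρ j ≤ ρ₀ ∧ ENNReal.ofReal (ρ j ^ s / 4) ≤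
        hausdorffContent X s (P ∩ Q (α j) ∩ Metric.closedBall j (ρ j))) ∧
      (J : Set X).Pairwise (fun i j => 4 * ρ i < dist i j) ∧
      BallSparse id ρ s 2 (J : Set X) ∧ M < ∑ j ∈ J, ρ j ^ s := by
  set H := {x ∈ P | ∃ a ρ, 0 < ρ ∧ ρ ≤ ρ₀ ∧
    ENNReal.ofReal (ρ ^ s / 4) ≤ hausdorffContent X s (P ∩ Q a ∩ Metric.closedBall x ρ)}
  have hH : ∀ x ∈ H, _ := fun x hx => hx.2
  choose! α ρ hρ hρρ₀ hheavy using hH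
  obtain ⟨J, hJH, hJ⟩ := exists_separated_ballSparse_of_lt_hausdorffContent hs hρ hρρ₀
    (hM.trans_le (hausdorffContent_le_heavyPoints hs hρ₀ hQ))
  exact ⟨ρ, α, J, fun j hj => ⟨hρ j (hJH hj), hρρ₀ j (hJH hj), hheavy j (hJH hj)⟩, hJ⟩

end BallSparse

section BallSum

variable {X : Type*} [PseudoMetricSpace X] {w w' : X → ℝ} {Y Y' : Finset X} {x x' : X} {u u' : ℝ}

/-- The total `w`-weight of the points of `Y` in the closed ball of radius `u` around `x`. -/
noncomputable def ballSum (w : X → ℝ) (Y : Finset X) (x : X) (u : ℝ) : ℝ :=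
  ∑ y ∈ Y with dist y x ≤ u, w y

theorem ballSum_nonneg (hw : ∀ y ∈ Y, 0 ≤ w y) : 0 ≤ ballSum w Y x u :=
  Finset.sum_nonneg fun y hy => hw y (Finset.mem_of_mem_filter y hy)

theorem ballSum_mono (hw : ∀ y ∈ Y', 0 ≤ w y)
    (h : ∀ y ∈ Y, dist y x ≤ u → y ∈ Y' ∧ dist y x' ≤ u') : ballSum w Y x u ≤ ballSum w Y' x' u' :=
  Finset.sum_le_sum_of_subset_of_nonneg
    (fun y hy => Finset.mem_filter.2 (h y (Finset.mem_filter.1 hy).1 (Finset.mem_filter.1 hy).2))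
    fun y hy _ => hw y (Finset.mem_of_mem_filter y hy)

theorem ballSum_le_sum (hw : ∀ y ∈ Y, 0 ≤ w y) : ballSum w Y x u ≤ ∑ y ∈ Y, w y :=
  Finset.sum_le_sum_of_subset_of_nonneg (Finset.filter_subset _ _) fun y hy _ => hw y hy

theorem ballSum_eq_sum (h : ∀ y ∈ Y, dist y x ≤ u) : ballSum w Y x u = ∑ y ∈ Y, w y := by
  rw [ballSum, Finset.filter_true_of_mem h]

theorem ballSum_union_of_far [DecidableEq X] (hw : ∀ y ∈ Y, w y = w' y)
    (hfar : ∀ y ∈ Y', u < dist y x) : ballSum w (Y ∪ Y') x u = ballSum w' Y x u := by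
  rw [ballSum, Finset.filter_union, Finset.filter_false_of_mem fun y hy => (hfar y hy).not_ge,
    Finset.union_empty, ballSum]
  exact Finset.sum_congr rfl fun y hy => hw y (Finset.mem_of_mem_filter y hy)

end BallSum

theorem le_rpow_mul_rpow {a b c e : ℝ} (ha : 0 ≤ a) (hab : a ≤ b) (hac : a ≤ c) (he : 0 ≤ e)
    (he' : e ≤ 1) : a ≤ b ^ e * c ^ (1 - e) :=
  calc a = a ^ e * a ^ (1 - e) := by rw [← Real.rpow_add' ha (by norm_num)]; simp
    _ ≤ b ^ e * c ^ (1 - e) := by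
      have := sub_nonneg.2 he'
      have := ha.trans hab
      gcongr

theorem exists_growth_le {m : ℕ} (hm : 0 < m) {v : ℕ → ℝ} {M : ℝ} (h₀ : 0 < v 0) (hM₀ : 0 ≤ M)
    (hM : v m ≤ M) : ∃ j < m, v (j + 1) ≤ v j * (M / v 0) ^ (1 / (m : ℝ)) := by
  by_contra! h
  have hq : 0 ≤ M / v 0 := div_nonneg hM₀ h₀.le
  have hgrowth := geom_lt (Real.rpow_nonneg hq (1 / (m : ℝ))) hm
    fun k hk => (mul_comm _ _).trans_lt (h k hk)
  rw [one_div, Real.rpow_inv_natCast_pow hq hm.ne', div_mul_cancel₀ _ h₀.ne'] at hgrowth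
  exact hgrowth.not_ge hM

section Skeleton

variable {X : Type*} {m : ℕ} {w : X → ℝ} {Y P Z S : Finset X} {M M₀ ℓ β u : ℝ} {ν : X → ℝ}

/-- `S ⊆ Y` is a gap-separated set carrying a redistribution `ν` of the weights `w` of `Y`, whose
`ν`-balls of radius `u < ℓ` are controlled by the `w`-balls of the larger radius `8 * m * u`. The
price of sparsifying is the factor `M ^ (1 / m)`, which replaces the `1 / m`-th power of the
ball weight. -/
structure IsSkeleton [PseudoMetricSpace X] (m : ℕ) (w : X → ℝ) (Y : Finset X) (M ℓ : ℝ)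
    (S : Finset X) (ν : X → ℝ) : Prop where
  subset : S ⊆ Y
  nonneg : ∀ x ∈ S, 0 ≤ ν x
  sum_eq : ∑ x ∈ S, ν x = ∑ x ∈ Y, w x
  isGapSeparated : IsGapSeparated (1 / (8 * m)) (S : Set X)
  ballSum_le : ∀ x ∈ S, ∀ u, 0 < u → u < ℓ →
    ballSum ν S x u ≤ M ^ (1 / (m : ℝ)) * ballSum w Y x (8 * m * u) ^ (1 - 1 / (m : ℝ))

section Pseudo

variable [PseudoMetricSpace X]

theorem one_div_natCast_le_one (hm : 0 < m) : 1 / (m : ℝ) ≤ 1 :=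
  (div_le_one (by positivity)).2 (Nat.one_le_cast.2 hm)

theorem IsSkeleton.of_subsingleton (hm : 0 < m) (hw : ∀ y ∈ Y, 0 ≤ w y)
    (hY : (Y : Set X).Subsingleton) (hM : ∀ y ∈ Y, w y ≤ M) : IsSkeleton m w Y M ℓ Y w where
  subset := subset_rfl
  nonneg := hw
  sum_eq := rfl
  isGapSeparated := .of_subsingleton hY
  ballSum_le x hx u hu _ := by
    have hYx : Y = {x} := Finset.eq_singleton_iff_unique_mem.2 ⟨hx, fun y hy => hY hy hx⟩
    have hum : u ≤ 8 * m * u := le_mul_of_one_le_left hu.le (by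
      have : (1 : ℝ) ≤ m := Nat.one_le_cast.2 hm
      linarith)
    refine le_rpow_mul_rpow (ballSum_nonneg hw) ((ballSum_le_sum hw).trans ?_)
      (ballSum_mono hw fun y hy hyu => ⟨hy, hyu.trans hum⟩) (by positivity)
      (one_div_natCast_le_one hm)
    rw [hYx, Finset.sum_singleton]
    exact hM x hx

/-- Up to radius `ℓ / 2` the bound is inherited from the skeleton `S` of `P`; beyond that radius
the ball of radius `8 * m * u` around `x` already accounts for all of the inflated weight of `P`. -/
theorem IsSkeleton.mul_ballSum_le (hm : 0 < m) (hw : ∀ y ∈ Y, 0 ≤ w y) (hPY : P ⊆ Y)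
    (hP : IsSkeleton m w P M₀ (ℓ / 2) S ν) (hβ : 0 ≤ β)
    (hβM₀ : β * M₀ ^ (1 / (m : ℝ)) ≤ M ^ (1 / (m : ℝ))) (hβM : β * ∑ y ∈ P, w y ≤ M)
    (hβball : ∀ x ∈ P, β * ∑ y ∈ P, w y ≤ ballSum w Y x (4 * m * ℓ)) {x : X} (hx : x ∈ S)
    (hu : 0 < u) :
    β * ballSum ν S x u ≤
      M ^ (1 / (m : ℝ)) * ballSum w Y x (8 * m * u) ^ (1 - 1 / (m : ℝ)) := by
  have hm' : 0 ≤ 1 - 1 / (m : ℝ) := sub_nonneg.2 (one_div_natCast_le_one hm)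
  have hM : 0 ≤ M :=
    (mul_nonneg hβ (Finset.sum_nonneg fun y hy => hw y (hPY hy))).trans hβM
  by_cases huℓ : u < ℓ / 2
  · have hnonneg : 0 ≤ ballSum w P x (8 * m * u) := ballSum_nonneg fun y hy => hw y (hPY hy)
    calc β * ballSum ν S x u
        ≤ β * (M₀ ^ (1 / (m : ℝ)) * ballSum w P x (8 * m * u) ^ (1 - 1 / (m : ℝ))) := by
          gcongr
          exact hP.ballSum_le x hx u hu huℓ
      _ = β * M₀ ^ (1 / (m : ℝ)) * ballSum w P x (8 * m * u) ^ (1 - 1 / (m : ℝ)) := by ring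
      _ ≤ M ^ (1 / (m : ℝ)) * ballSum w Y x (8 * m * u) ^ (1 - 1 / (m : ℝ)) := by
          gcongr
          exact ballSum_mono hw fun y hy h => ⟨hPY hy, h⟩
  · have hle : β * ballSum ν S x u ≤ β * ∑ y ∈ P, w y := by
      rw [← hP.sum_eq]
      gcongr
      exact ballSum_le_sum hP.nonneg
    have hradius : 4 * m * ℓ ≤ 8 * m * u := by
      have : (m : ℝ) * ℓ ≤ m * (2 * u) := by gcongr; linarith
      linarith
    exact le_rpow_mul_rpow (mul_nonneg hβ (ballSum_nonneg hP.nonneg)) (hle.trans hβM)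
      (hle.trans ((hβball x (hP.subset hx)).trans
        (ballSum_mono hw fun y hy h => ⟨hy, h.trans hradius⟩)))
      (by positivity) (one_div_natCast_le_one hm)

/-- The points of `Y` outside `P ∪ Z` are discarded; their weight is compensated by inflating the
weights of `P` by the factor `β`. -/
theorem IsSkeleton.glue {SP SZ : Finset X} {νP νZ : X → ℝ} (hm : 0 < m) (hw : ∀ y ∈ Y, 0 ≤ w y)
    (hℓ : 0 < ℓ) (hPY : P ⊆ Y) (hZY : Z ⊆ Y) (hgap : ∀ a ∈ P, ∀ b ∈ Z, ℓ < dist a b)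
    (hdiam : ∀ x ∈ Y, ∀ y ∈ Y, dist x y ≤ 8 * m * ℓ)
    (hP : IsSkeleton m w P M₀ (ℓ / 2) SP νP) (hZ : IsSkeleton m w Z M ℓ SZ νZ) (hβ : 0 ≤ β)
    (hsum : β * ∑ y ∈ P, w y + ∑ y ∈ Z, w y = ∑ y ∈ Y, w y)
    (hβM₀ : β * M₀ ^ (1 / (m : ℝ)) ≤ M ^ (1 / (m : ℝ))) (hβM : β * ∑ y ∈ P, w y ≤ M)
    (hβball : ∀ x ∈ P, β * ∑ y ∈ P, w y ≤ ballSum w Y x (4 * m * ℓ)) :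
    ∃ S ν, IsSkeleton m w Y M ℓ S ν := by
  classical
  have hgap' : ∀ a ∈ SP, ∀ b ∈ SZ, ℓ < dist a b := fun a ha b hb =>
    hgap a (hP.subset ha) b (hZ.subset hb)
  have hdisj : Disjoint SP SZ := Finset.disjoint_left.2 fun a haP haZ =>
    (hgap' a haP a haZ).not_ge (by rw [dist_self]; exact hℓ.le)
  set ν : X → ℝ := fun x => if x ∈ SP then β * νP x else νZ x
  have hνP : ∀ x ∈ SP, ν x = β * νP x := fun x hx => if_pos hx
  have hνZ : ∀ x ∈ SZ, ν x = νZ x := fun x hx => if_neg (Finset.disjoint_right.1 hdisj hx)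
  have hsub : SP ∪ SZ ⊆ Y :=
    Finset.union_subset (hP.subset.trans hPY) (hZ.subset.trans hZY)
  refine ⟨SP ∪ SZ, ν, hsub, fun x hx => ?_, ?_, ?_, fun x hx u hu huℓ => ?_⟩
  · rcases Finset.mem_union.1 hx with hx | hx
    · exact hνP x hx ▸ mul_nonneg hβ (hP.nonneg x hx)
    · exact hνZ x hx ▸ hZ.nonneg x hx
  · rw [Finset.sum_union hdisj, Finset.sum_congr rfl hνP, Finset.sum_congr rfl hνZ,
      ← Finset.mul_sum, hP.sum_eq, hZ.sum_eq, hsum]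
  · rw [Finset.coe_union]
    refine hP.isGapSeparated.union hZ.isGapSeparated hℓ
      (fun a ha b hb => (hgap' a ha b hb).le) fun x hx y hy => ?_
    rw [← Finset.coe_union, Finset.mem_coe] at hx hy
    rw [one_div_mul_eq_div, div_le_iff₀' (by positivity)]
    exact hdiam x (hsub hx) y (hsub hy)
  · rcases Finset.mem_union.1 hx with hx | hx
    · rw [ballSum_union_of_far hνP fun y hy => huℓ.trans (dist_comm x y ▸ hgap' x hx y hy),
        ballSum, ← Finset.mul_sum]
      exact hP.mul_ballSum_le hm hw hPY hβ hβM₀ hβM hβball hx hu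
    · rw [Finset.union_comm,
        ballSum_union_of_far hνZ fun y hy => huℓ.trans (hgap' y hy x hx)]
      refine (hZ.ballSum_le x hx u hu huℓ).trans ?_
      have hM : 0 ≤ M := le_trans (mul_nonneg hβ
        (Finset.sum_nonneg fun y hy => hw y (hPY hy))) hβM
      have hnonneg : 0 ≤ ballSum w Z x (8 * m * u) := ballSum_nonneg fun y hy => hw y (hZY hy)
      have hm' : 0 ≤ 1 - 1 / (m : ℝ) := sub_nonneg.2 (one_div_natCast_le_one hm)
      gcongr
      exact ballSum_mono hw fun y hy h => ⟨hZY hy, h⟩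

theorem exists_light_annulus (hm : 0 < m) (hw : ∀ y ∈ Y, 0 < w y) (hY : Y.Nonempty) (hℓ : 0 < ℓ)
    (hM : ∀ x ∈ Y, ballSum w Y x (2 * m * ℓ) ≤ M) :
    ∃ x₁ ∈ Y, ∃ R, m * ℓ ≤ R ∧ R + ℓ ≤ 2 * m * ℓ ∧ 0 < ballSum w Y x₁ (m * ℓ) ∧
      (∀ x ∈ Y, ballSum w Y x (m * ℓ) ≤ ballSum w Y x₁ (m * ℓ)) ∧
      ballSum w Y x₁ (R + ℓ) ≤
        ballSum w Y x₁ R * (M / ballSum w Y x₁ (m * ℓ)) ^ (1 / (m : ℝ)) := by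
  obtain ⟨x₁, hx₁, hmax⟩ := Y.exists_max_image (fun x => ballSum w Y x (m * ℓ)) hY
  have hpos : 0 < ballSum w Y x₁ (m * ℓ) :=
    Finset.sum_pos (fun y hy => hw y (Finset.mem_of_mem_filter y hy))
      ⟨x₁, Finset.mem_filter.2 ⟨hx₁, by rw [dist_self]; positivity⟩⟩
  have hM₀ : 0 ≤ M := (ballSum_nonneg fun y hy => (hw y hy).le).trans (hM x₁ hx₁)
  obtain ⟨j, hjm, hj⟩ := exists_growth_le (v := fun j => ballSum w Y x₁ ((m + j) * ℓ)) (M := M) hm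
    (by simpa using hpos) hM₀ (by simpa only [← two_mul] using hM x₁ hx₁)
  have hjm' : (j : ℝ) + 1 ≤ m := by exact_mod_cast hjm
  refine ⟨x₁, hx₁, (m + j) * ℓ, by gcongr; simp, ?_, hpos, hmax, ?_⟩
  · calc (m + j) * ℓ + ℓ = (m + (j + 1)) * ℓ := by ring
      _ ≤ (m + m) * ℓ := by gcongr
      _ = 2 * m * ℓ := by ring
  · convert hj using 3
    · push_cast; ring
    · simp

end Pseudo

section Metric

variable [MetricSpace X]

/-- One step of region growing: the ball `P` around `x₁` and the rest `Z` are separated by the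
light annulus, and `P` only has to be treated at half the scale. -/
theorem IsSkeleton.exists_of_light_annulus {x₁ : X} {R : ℝ} (hm : 0 < m) (hw : ∀ y ∈ Y, 0 < w y)
    (hℓ : 0 < ℓ) (hM : ∀ x ∈ Y, ballSum w Y x (2 * m * ℓ) ≤ M)
    (hdiam : ∀ x ∈ Y, ∀ y ∈ Y, dist x y ≤ 8 * m * ℓ)
    (hx₁ : x₁ ∈ Y) (hmR : m * ℓ ≤ R) (hRm : R + ℓ ≤ 2 * m * ℓ)
    (hpos : 0 < ballSum w Y x₁ (m * ℓ))
    (hR : ballSum w Y x₁ (R + ℓ) ≤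
      ballSum w Y x₁ R * (M / ballSum w Y x₁ (m * ℓ)) ^ (1 / (m : ℝ)))
    (hP : ∃ S ν, IsSkeleton m w {y ∈ Y | dist y x₁ ≤ R} (ballSum w Y x₁ (m * ℓ)) (ℓ / 2) S ν)
    (hZ : ∃ S ν, IsSkeleton m w {y ∈ Y | ¬ dist y x₁ ≤ R + ℓ} M ℓ S ν) :
    ∃ S ν, IsSkeleton m w Y M ℓ S ν := by
  obtain ⟨SP, νP, hP⟩ := hP
  obtain ⟨SZ, νZ, hZ⟩ := hZ
  have hw' : ∀ y ∈ Y, 0 ≤ w y := fun y hy => (hw y hy).le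
  have hposR : 0 < ballSum w Y x₁ R :=
    hpos.trans_le (ballSum_mono hw' fun y hy h => ⟨hy, h.trans hmR⟩)
  have hRM : ballSum w Y x₁ (R + ℓ) ≤ M :=
    (ballSum_mono hw' fun y hy h => ⟨hy, h.trans hRm⟩).trans (hM x₁ hx₁)
  have hM₀ : 0 ≤ M := (ballSum_nonneg hw').trans hRM
  set β := ballSum w Y x₁ (R + ℓ) / ballSum w Y x₁ R
  have hβ : β * ∑ y ∈ Y with dist y x₁ ≤ R, w y = ballSum w Y x₁ (R + ℓ) :=
    div_mul_cancel₀ _ hposR.ne'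
  refine hP.glue hm hw' hℓ (Finset.filter_subset _ _) (Finset.filter_subset _ _)
    (fun a ha b hb => ?_) hdiam hZ (div_nonneg (ballSum_nonneg hw') hposR.le) ?_ ?_
    (hβ.trans_le hRM) fun x hx => hβ.trans_le ?_
  · rw [Finset.mem_filter, not_le] at hb
    linarith [(Finset.mem_filter.1 ha).2, dist_triangle_left b x₁ a]
  · rw [hβ]
    exact Finset.sum_filter_add_sum_filter_not Y (fun y => dist y x₁ ≤ R + ℓ) w
  · calc β * ballSum w Y x₁ (m * ℓ) ^ (1 / (m : ℝ))
        ≤ (M / ballSum w Y x₁ (m * ℓ)) ^ (1 / (m : ℝ)) *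
            ballSum w Y x₁ (m * ℓ) ^ (1 / (m : ℝ)) := by
          gcongr
          exact (div_le_iff₀' hposR).2 hR
      _ = M ^ (1 / (m : ℝ)) := by
          rw [← Real.mul_rpow (div_nonneg hM₀ hpos.le) hpos.le, div_mul_cancel₀ _ hpos.ne']
  · refine ballSum_mono hw' fun y hy h => ⟨hy, ?_⟩
    linarith [(Finset.mem_filter.1 hx).2, dist_triangle_right y x x₁]

theorem exists_isSkeleton_of_separated (hm : 0 < m) (n : ℕ) (hw : ∀ y ∈ Y, 0 < w y) (hℓ : 0 < ℓ)
    (hdiam : ∀ x ∈ Y, ∀ y ∈ Y, dist x y ≤ 8 * m * ℓ)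
    (hsep : (Y : Set X).Pairwise fun x y => 8 * m * ℓ / 2 ^ n < dist x y)
    (hM : ∀ x ∈ Y, ballSum w Y x (2 * m * ℓ) ≤ M) : ∃ S ν, IsSkeleton m w Y M ℓ S ν := by
  induction n generalizing Y ℓ M with
  | zero =>
    have hsub : (Y : Set X).Subsingleton := fun x hx y hy => by
      by_contra hxy
      exact (hsep hx hy hxy).not_ge (by simpa using hdiam x hx y hy)
    refine ⟨Y, w, .of_subsingleton hm (fun y hy => (hw y hy).le) hsub fun y hy => ?_⟩
    refine le_trans ?_ (hM y hy)
    exact Finset.single_le_sum (fun z hz => (hw z (Finset.mem_of_mem_filter z hz)).le)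
      (Finset.mem_filter.2 ⟨hy, by rw [dist_self]; positivity⟩)
  | succ n ih =>
    induction Y using Finset.strongInduction with
    | H Y ihZ =>
    have hw' : ∀ y ∈ Y, 0 ≤ w y := fun y hy => (hw y hy).le
    rcases Y.eq_empty_or_nonempty with rfl | hY
    · exact ⟨∅, w, .of_subsingleton hm (by simp) (by simp) (by simp)⟩
    obtain ⟨x₁, hx₁, R, hmR, hRm, hpos, hmax, hR⟩ := exists_light_annulus hm hw hY hℓ hM
    have hP : {y ∈ Y | dist y x₁ ≤ R} ⊆ Y := Finset.filter_subset _ _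
    have hZ : {y ∈ Y | ¬ dist y x₁ ≤ R + ℓ} ⊆ Y := Finset.filter_subset _ _
    refine IsSkeleton.exists_of_light_annulus hm hw hℓ hM hdiam hx₁ hmR hRm hpos hR
      (ih (fun y hy => hw y (hP hy)) (half_pos hℓ) (fun x hx y hy => ?_) (fun x hx y hy hxy => ?_)
        fun x hx => ?_)
      (ihZ _ (Finset.filter_ssubset.2 ⟨x₁, hx₁, ?_⟩) (fun y hy => hw y (hZ hy))
        (fun x hx y hy => hdiam x (hZ hx) y (hZ hy)) (hsep.mono (by exact_mod_cast hZ)) fun x hx =>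
        (ballSum_mono hw' fun y hy h => ⟨hZ hy, h⟩).trans (hM x (hZ hx)))
    · linarith [(Finset.mem_filter.1 hx).2, (Finset.mem_filter.1 hy).2,
        dist_triangle_right x y x₁]
    · calc 8 * m * (ℓ / 2) / 2 ^ n = 8 * m * ℓ / 2 ^ (n + 1) := by rw [pow_succ']; ring
        _ < dist x y := hsep (hP hx) (hP hy) hxy
    · refine le_trans (ballSum_mono hw' fun y hy h => ⟨hP hy, ?_⟩) (hmax x (hP hx))
      linarith
    · rw [dist_self, not_not]
      linarith [mul_nonneg (Nat.cast_nonneg (α := ℝ) m) hℓ.le]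

theorem exists_gapSeparated_redistribution (hm : 0 < m) (hw : ∀ y ∈ Y, 0 < w y) :
    ∃ S ⊆ Y, ∃ ν : X → ℝ, (∀ x ∈ S, 0 ≤ ν x) ∧ ∑ x ∈ S, ν x = ∑ y ∈ Y, w y ∧
      IsGapSeparated (1 / (8 * m)) (S : Set X) ∧ ∀ x ∈ S, ∀ u, 0 < u →
        ballSum ν S x u ≤ (∑ y ∈ Y, w y) ^ (1 / (m : ℝ)) *
          ballSum w Y x (8 * m * u) ^ (1 - 1 / (m : ℝ)) := by
  have hw' : ∀ y ∈ Y, 0 ≤ w y := fun y hy => (hw y hy).le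
  obtain ⟨D, hD₀, hD⟩ : ∃ D > 0, ∀ x ∈ Y, ∀ y ∈ Y, dist x y ≤ D :=
    ⟨Metric.diam (Y : Set X) + 1, by positivity, fun x hx y hy =>
      (Metric.dist_le_diam_of_mem Y.finite_toSet.isBounded hx hy).trans (by linarith)⟩
  obtain ⟨σ, hσ₀, hσ⟩ : ∃ σ > 0, (Y : Set X).Pairwise fun x y => σ ≤ dist x y := by
    rcases (Y : Set X).subsingleton_or_nontrivial with h | h
    · exact ⟨1, one_pos, h.pairwise _⟩
    · exact ⟨_, Y.finite_toSet.infsep_pos_iff_nontrivial.2 h, fun x hx y hy hxy =>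
        Set.infsep_le_dist_of_mem hx hy hxy⟩
  obtain ⟨n, hn⟩ := pow_unbounded_of_one_lt (D / σ) one_lt_two
  have hm₀ : (0 : ℝ) < 8 * m := by positivity
  have hℓ : 8 * m * (D / (8 * m)) = D := mul_div_cancel₀ D hm₀.ne'
  obtain ⟨S, ν, h⟩ := exists_isSkeleton_of_separated hm n hw (div_pos hD₀ hm₀)
    (by rwa [hℓ]) (fun x hx y hy hxy => by
      rw [hℓ]
      refine (div_lt_iff₀' (by positivity)).2 ?_
      exact ((div_lt_iff₀ hσ₀).1 hn).trans_le
        (mul_le_mul_of_nonneg_left (hσ hx hy hxy) (by positivity)))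
    fun _ _ => ballSum_le_sum hw'
  refine ⟨S, h.subset, ν, h.nonneg, h.sum_eq, h.isGapSeparated, fun x hx u hu => ?_⟩
  rcases lt_or_ge u (D / (8 * m)) with huℓ | huℓ
  · exact h.ballSum_le x hx u hu huℓ
  have hle : ballSum ν S x u ≤ ∑ y ∈ Y, w y := h.sum_eq ▸ ballSum_le_sum h.nonneg
  refine le_rpow_mul_rpow (ballSum_nonneg h.nonneg) hle (hle.trans (ballSum_eq_sum ?_).ge)
    (by positivity) (one_div_natCast_le_one hm)
  exact fun y hy => (hD y hy x (h.subset hx)).trans ((div_le_iff₀' hm₀).1 huℓ)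

end Metric

end Skeleton

section Frostman

variable {X : Type*} [PseudoMetricSpace X] {C s t r δ L : ℝ} {ρ μ : X → ℝ} {S J : Finset X}

/-- A probability weight `μ` on the finite set `S` satisfying a Frostman condition of exponent `s`
at the scale `r`, for all balls around a point `x` of `S` of radius at least `ρ x`. -/
structure IsFrostmanWeight (C s r : ℝ) (ρ : X → ℝ) (S : Finset X) (μ : X → ℝ) : Prop where
  nonneg : ∀ x ∈ S, 0 ≤ μ x
  sum_eq_one : ∑ x ∈ S, μ x = 1
  ballSum_le : ∀ x ∈ S, ∀ u, ρ x ≤ u → ballSum μ S x u ≤ C * (u / r) ^ s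

theorem rpow_le_rpow_sub_mul_rpow {x : ℝ} (hx : 0 ≤ x) (hxδ : x ≤ δ) (ht : 0 < t) (hts : t ≤ s) :
    x ^ s ≤ δ ^ (s - t) * x ^ t :=
  calc x ^ s = x ^ (s - t) * x ^ t := by
        rw [← Real.rpow_add' hx (by linarith), sub_add_cancel]
    _ ≤ δ ^ (s - t) * x ^ t := by
        have := sub_nonneg.2 hts
        gcongr

theorem IsFrostmanWeight.sum_ballSum_le (hμ : IsFrostmanWeight C s r ρ S μ) (hC : 0 ≤ C)
    (hr : 0 < r) (ht : 0 < t) (hts : t ≤ s) (hJ : J ⊆ S) {v : X → ℝ} {a : ℝ} (ha : 1 ≤ a)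
    (hv₀ : ∀ j ∈ J, 0 ≤ v j) (hv : ∀ j ∈ J, ρ j ≤ v j) (hvr : ∀ j ∈ J, v j ≤ δ * r) :
    ∑ j ∈ J, ballSum μ S j (a * v j) ≤ C * a ^ s * δ ^ (s - t) * ((∑ j ∈ J, v j ^ t) / r ^ t) := by
  rw [Finset.sum_div, Finset.mul_sum]
  refine Finset.sum_le_sum fun j hj => ?_
  have hdiv : 0 ≤ v j / r := div_nonneg (hv₀ j hj) hr.le
  calc ballSum μ S j (a * v j)
      ≤ C * (a * v j / r) ^ s := hμ.ballSum_le j (hJ hj) _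
        ((hv j hj).trans (le_mul_of_one_le_left (hv₀ j hj) ha))
    _ = C * (a ^ s * (v j / r) ^ s) := by
        rw [mul_div_assoc, Real.mul_rpow (by positivity) hdiv]
    _ ≤ C * (a ^ s * (δ ^ (s - t) * (v j / r) ^ t)) := by
        gcongr
        exact rpow_le_rpow_sub_mul_rpow hdiv ((div_le_iff₀ hr).2 (hvr j hj)) ht hts
    _ = C * a ^ s * δ ^ (s - t) * (v j ^ t / r ^ t) := by
        rw [Real.div_rpow (hv₀ j hj) hr.le]
        ring

theorem sum_le_sum_ballSum_of_cover {T Q : Finset X} {R : X → ℝ} (hμ : ∀ x ∈ S, 0 ≤ μ x)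
    (hT : T ⊆ S) (hcover : ∀ x ∈ T, ∃ b ∈ Q, dist x b ≤ R b) :
    ∑ x ∈ T, μ x ≤ ∑ b ∈ Q, ballSum μ S b (R b) := by
  simp only [ballSum, Finset.sum_filter]
  rw [Finset.sum_comm]
  have hnonneg : ∀ x ∈ S, ∀ b ∈ Q, 0 ≤ if dist x b ≤ R b then μ x else 0 := fun x hx b _ => by
    split_ifs <;> simp [hμ x hx]
  refine (Finset.sum_le_sum fun x hx => ?_).trans (Finset.sum_le_sum_of_subset_of_nonneg hT
    fun x hx _ => Finset.sum_nonneg (hnonneg x hx))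
  obtain ⟨b, hb, hxb⟩ := hcover x hx
  exact (if_pos hxb).symm.trans_le (Finset.single_le_sum (hnonneg x (hT hx)) hb)

theorem IsFrostmanWeight.sum_le (hμ : IsFrostmanWeight C s r ρ S μ) (hC : 0 ≤ C) (hr : 0 < r)
    (ht : 0 < t) (hts : t ≤ s) (hJ : J ⊆ S) (hρ₀ : ∀ j ∈ J, 0 ≤ ρ j) (hρ : ∀ j ∈ J, ρ j ≤ δ * r) :
    ∑ j ∈ J, μ j ≤ C * δ ^ (s - t) * ((∑ j ∈ J, ρ j ^ t) / r ^ t) :=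
  calc ∑ j ∈ J, μ j
      ≤ ∑ j ∈ J, ballSum μ S j (1 * ρ j) := sum_le_sum_ballSum_of_cover hμ.nonneg hJ
        fun j hj => ⟨j, hj, by rw [dist_self, one_mul]; exact hρ₀ j hj⟩
    _ ≤ C * 1 ^ s * δ ^ (s - t) * ((∑ j ∈ J, ρ j ^ t) / r ^ t) :=
        hμ.sum_ballSum_le hC hr ht hts hJ le_rfl hρ₀ (fun _ _ => le_rfl) hρ
    _ = C * δ ^ (s - t) * ((∑ j ∈ J, ρ j ^ t) / r ^ t) := by rw [Real.one_rpow, mul_one]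

theorem IsFrostmanWeight.sum_le_of_cover {T Q : Finset X} {u : X → ℝ} {a : ℝ}
    (hμ : IsFrostmanWeight C s r ρ S μ) (hC : 0 ≤ C) (hr : 0 < r) (ht : 0 < t) (hts : t ≤ s)
    (hT : T ⊆ S) (hQ : Q ⊆ S) (ha : 1 ≤ a) (hu₀ : ∀ b ∈ Q, 0 ≤ u b) (hρu : ∀ b ∈ Q, ρ b ≤ u b)
    (hur : ∀ b ∈ Q, u b ≤ r) (hcover : ∀ x ∈ T, ∃ b ∈ Q, dist x b ≤ a * u b) :
    ∑ x ∈ T, μ x ≤ C * a ^ s * ((∑ b ∈ Q, u b ^ t) / r ^ t) :=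
  calc ∑ x ∈ T, μ x
      ≤ ∑ b ∈ Q, ballSum μ S b (a * u b) := sum_le_sum_ballSum_of_cover hμ.nonneg hT hcover
    _ ≤ C * a ^ s * 1 ^ (s - t) * ((∑ b ∈ Q, u b ^ t) / r ^ t) :=
        hμ.sum_ballSum_le hC hr ht hts hQ ha hu₀ hρu fun b hb => (one_mul r).symm ▸ hur b hb
    _ = C * a ^ s * ((∑ b ∈ Q, u b ^ t) / r ^ t) := by rw [Real.one_rpow, mul_one]

/-- If a maximal sparse subset had too little weight, it and the saturated balls blocking its
extension would cover `S` by few balls, contradicting the Frostman condition. -/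
theorem IsFrostmanWeight.exists_ballSparse (hμ : IsFrostmanWeight C s r ρ S μ) (hC : 0 ≤ C)
    (hr : 0 < r) (ht : 0 < t) (hts : t ≤ s) (hρ₀ : ∀ x ∈ S, 0 < ρ x)
    (hρ : ∀ x ∈ S, ρ x ≤ δ * r) (hδ : 0 ≤ δ) (hL : 2 ≤ L)
    (hsmall : C * δ ^ (s - t) + C * 6 ^ s / (L - 1) < 1) :
    ∃ J ⊆ S, BallSparse id ρ t L (J : Set X) ∧ r ^ t ≤ ∑ j ∈ J, ρ j ^ t := by
  classical
  obtain ⟨J', hJmax⟩ := exists_maximal_ballSparse id ρ t (zero_le_two.trans hL) (S : Set X)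
  obtain ⟨J, rfl⟩ := (S.finite_toSet.subset hJmax.prop.1).exists_finset_coe
  have hJS : J ⊆ S := Finset.coe_subset.1 hJmax.prop.1
  refine ⟨J, hJS, hJmax.prop.2, ?_⟩
  by_contra! hlight
  obtain ⟨Q', u, hQS, hρu, hu, hcover⟩ := exists_saturated_cover_of_maximal hρ₀ ht
    (by linarith) hJmax (M := r ^ t) fun F hF => le_trans (Finset.sum_le_sum_of_subset_of_nonneg
      (Finset.coe_subset.1 hF) fun j hj _ => Real.rpow_nonneg (hρ₀ j (hJS hj)).le t) hlight.le
  obtain ⟨Q, rfl⟩ := (S.finite_toSet.subset hQS).exists_finset_coe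
  rw [Finset.coe_subset] at hQS
  have hu₀ : ∀ b ∈ Q, 0 < u b := fun b hb => (hρ₀ b (hQS hb)).trans_le (hρu b hb)
  have hrt : 0 < r ^ t := Real.rpow_pos_of_pos hr t
  have hur : ∀ b ∈ Q, u b ≤ r := fun b hb => by
    have hub : u b ^ t ≤ r ^ t / (L - 1) := by simpa using hu {b} (by simpa using hb)
    rw [← Real.rpow_le_rpow_iff (hu₀ b hb).le hr.le ht]
    exact hub.trans (div_le_self hrt.le (by linarith))
  have hsumJ : ∑ x ∈ J, μ x ≤ C * δ ^ (s - t) := by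
    refine (hμ.sum_le hC hr ht hts hJS (fun x hx => (hρ₀ x (hJS hx)).le)
      fun x hx => hρ x (hJS hx)).trans (mul_le_of_le_one_right (by positivity) ?_)
    exact (div_le_one hrt).2 hlight.le
  have hsumQ : ∑ x ∈ S \ J, μ x ≤ C * 6 ^ s / (L - 1) :=
    calc ∑ x ∈ S \ J, μ x
        ≤ C * 6 ^ s * ((∑ b ∈ Q, u b ^ t) / r ^ t) :=
          hμ.sum_le_of_cover hC hr ht hts Finset.sdiff_subset hQS (by norm_num)
            (fun b hb => (hu₀ b hb).le) hρu hur fun x hx =>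
              let ⟨b, hb, h, _⟩ := hcover x (by simpa using hx)
              ⟨b, hb, h⟩
      _ ≤ C * 6 ^ s * (r ^ t / (L - 1) / r ^ t) := by
          gcongr
          exact hu Q subset_rfl
      _ = C * 6 ^ s / (L - 1) := by
          rw [div_right_comm, div_self hrt.ne', mul_one_div]
  have hsum : ∑ x ∈ S \ J, μ x + ∑ x ∈ J, μ x = 1 :=
    (Finset.sum_sdiff hJS).trans hμ.sum_eq_one
  linarith

theorem BallSparse.ballSum_rpow_le (hJ : BallSparse id ρ s L (J : Set X))
    (hρ : ∀ j ∈ J, 0 < ρ j) (hsep : (J : Set X).Pairwise fun i j => 4 * ρ i < dist i j) {x : X}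
    (hx : x ∈ J) {u : ℝ} (hu : ρ x ≤ u) :
    ballSum (fun j => ρ j ^ s) J x u ≤ L * u ^ s := by
  refine hJ x u ((hρ x hx).trans_le hu) _ (Finset.coe_subset.2 (Finset.filter_subset _ _))
    fun j hj => ?_
  obtain ⟨hjJ, hju⟩ := Finset.mem_filter.1 hj
  refine ⟨hju, ?_⟩
  rcases eq_or_ne j x with rfl | hjx
  · exact hu
  · linarith [hsep hjJ hx hjx, hρ j hjJ]

end Frostman

theorem exists_isFrostmanWeight {X : Type*} [MetricSpace X] {s c r : ℝ} {ρ : X → ℝ} {m : ℕ}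
    {Y : Finset X} (hm : 0 < m) (hc : 0 < c) (hr : 0 < r) (hρ : ∀ j ∈ Y, 0 < ρ j)
    (hsep : (Y : Set X).Pairwise fun i j => 4 * ρ i < dist i j)
    (hsparse : BallSparse id ρ s 2 (Y : Set X)) (hY : c * r ^ s ≤ ∑ j ∈ Y, ρ j ^ s) :
    ∃ S ⊆ Y, IsGapSeparated (1 / (8 * m)) (S : Set X) ∧ ∃ μ, IsFrostmanWeight
      ((2 / c * (8 * m) ^ s) ^ (1 - 1 / (m : ℝ))) (s * (1 - 1 / (m : ℝ))) r ρ S μ := by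
  set N := ∑ j ∈ Y, ρ j ^ s
  have hN : 0 < N := lt_of_lt_of_le (by positivity) hY
  have hρs : ∀ j ∈ Y, 0 < ρ j ^ s := fun j hj => Real.rpow_pos_of_pos (hρ j hj) s
  obtain ⟨S, hSY, ν, hν₀, hν, hgap, hball⟩ := exists_gapSeparated_redistribution hm hρs
  refine ⟨S, hSY, hgap, fun x => ν x / N, fun x hx => div_nonneg (hν₀ x hx) hN.le, ?_,
    fun x hx u hu => ?_⟩
  · rw [← Finset.sum_div, hν, div_self hN.ne']
  have hu₀ : 0 < u := (hρ x (hSY hx)).trans_le hu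
  have hm₁ : (1 : ℝ) ≤ m := Nat.one_le_cast.2 hm
  have he : 0 ≤ 1 - 1 / (m : ℝ) := sub_nonneg.2 (one_div_natCast_le_one hm)
  have hweight : ballSum (fun j => ρ j ^ s) Y x (8 * m * u) ≤ 2 * (8 * m * u) ^ s :=
    hsparse.ballSum_rpow_le hρ hsep (hSY hx)
      (hu.trans (le_mul_of_one_le_left hu₀.le (by linarith)))
  have hweight₀ : 0 ≤ ballSum (fun j => ρ j ^ s) Y x (8 * m * u) :=
    ballSum_nonneg fun j hj => (hρs j hj).le
  calc ballSum (fun x => ν x / N) S x u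
      = ballSum ν S x u / N := (Finset.sum_div ..).symm
    _ ≤ N ^ (1 / (m : ℝ)) * (2 * (8 * m * u) ^ s) ^ (1 - 1 / (m : ℝ)) / N := by
        gcongr
        refine (hball x hx u hu₀).trans ?_
        gcongr
    _ = (2 * (8 * m * u) ^ s / N) ^ (1 - 1 / (m : ℝ)) := by
        rw [Real.div_rpow (by positivity) hN.le, Real.rpow_sub hN, Real.rpow_one]
        field_simp
    _ ≤ (2 * (8 * m * u) ^ s / (c * r ^ s)) ^ (1 - 1 / (m : ℝ)) := by gcongr
    _ = (2 / c * (8 * m) ^ s * (u / r) ^ s) ^ (1 - 1 / (m : ℝ)) := by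
        rw [Real.mul_rpow (by positivity) hu₀.le, Real.div_rpow hu₀.le hr.le]
        ring_nf
    _ = (2 / c * (8 * m) ^ s) ^ (1 - 1 / (m : ℝ)) * (u / r) ^ (s * (1 - 1 / (m : ℝ))) := by
        rw [Real.mul_rpow (by positivity) (by positivity), Real.rpow_mul (by positivity)]

section Trim

variable {ι : Type*} {J : Finset ι}

theorem exists_subset_le_sum_le_add {M : Type*} [AddCommMonoid M] [LinearOrder M]
    [IsOrderedAddMonoid M] {g : ι → M} {a b : M} (ha : 0 ≤ a) (hb : 0 ≤ b)
    (hg : ∀ j ∈ J, g j ≤ b) (h : a ≤ ∑ j ∈ J, g j) :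
    ∃ J' ⊆ J, a ≤ ∑ j ∈ J', g j ∧ ∑ j ∈ J', g j ≤ b + a := by
  classical
  induction J using Finset.induction_on with
  | empty => exact ⟨∅, subset_rfl, h, by simpa using add_nonneg hb ha⟩
  | insert i J hi ih =>
    rcases le_or_gt a (∑ j ∈ J, g j) with hJ | hJ
    · obtain ⟨J', hJ', h'⟩ := ih (fun j hj => hg j (Finset.mem_insert_of_mem hj)) hJ
      exact ⟨J', hJ'.trans (Finset.subset_insert _ _), h'⟩
    · refine ⟨insert i J, subset_rfl, h, ?_⟩
      rw [Finset.sum_insert hi]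
      exact add_le_add (hg i (Finset.mem_insert_self _ _)) hJ.le

theorem exists_subset_sum_eq_of_le_sum {g : ι → ℝ} {a : ℝ} (ha : 0 < a)
    (hg₀ : ∀ j ∈ J, 0 ≤ g j) (hg : ∀ j ∈ J, g j ≤ a) (h : a ≤ ∑ j ∈ J, g j) :
    ∃ J' ⊆ J, ∃ b : ι → ℝ, (∀ j ∈ J', g j / 2 ≤ b j ∧ b j ≤ g j) ∧ ∑ j ∈ J', b j = a := by
  obtain ⟨J', hJ', hle, hge⟩ := exists_subset_le_sum_le_add ha.le ha.le hg h
  have hpos : 0 < ∑ j ∈ J', g j := ha.trans_le hle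
  refine ⟨J', hJ', fun j => g j * (a / ∑ j ∈ J', g j), fun j hj => ⟨?_, ?_⟩, ?_⟩
  · refine (div_eq_mul_one_div _ _).trans_le (mul_le_mul_of_nonneg_left ?_ (hg₀ j (hJ' hj)))
    rw [div_le_div_iff₀ two_pos hpos]
    linarith
  · exact mul_le_of_le_one_right (hg₀ j (hJ' hj)) ((div_le_one hpos).2 hle)
  · rw [← Finset.sum_mul, mul_div_cancel₀ _ hpos.ne']

end Trim

section Refinement

variable {s t c : ℝ}

theorem eventually_mul_rpow_lt {p C ε : ℝ} (hp : 0 < p) (hε : 0 < ε) :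
    ∀ᶠ δ in nhdsWithin (0 : ℝ) (Set.Ioi 0), C * δ ^ p < ε := by
  have hlim : Filter.Tendsto (fun δ : ℝ => C * δ ^ p) (nhds 0) (nhds 0) :=
    (continuous_const.mul (Real.continuous_rpow_const hp.le)).tendsto' 0 0
      (by simp [Real.zero_rpow hp.ne'])
  exact nhdsWithin_le_nhds (hlim.eventually_lt_const hε)

theorem exists_lt_mul_one_sub_one_div (hts : t < s) :
    ∃ m : ℕ, 0 < m ∧ t < s * (1 - 1 / (m : ℝ)) := by
  have hlim : Filter.Tendsto (fun m : ℕ => s * (1 - 1 / (m : ℝ))) Filter.atTop (nhds s) := by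
    simpa using (tendsto_one_div_atTop_nhds_zero_nat (𝕜 := ℝ)).const_sub 1 |>.const_mul s
  exact ((Filter.eventually_gt_atTop 0).and (hlim.eventually_const_lt hts)).exists

/-- Passing from the exponent `s` to `t < s` at a scale `δ * r` gains a factor that is small with
`δ`, which pays for the losses in `IsFrostmanWeight.exists_ballSparse`. -/
theorem exists_ballSparse_gapSeparated_subset (X : Type*) [MetricSpace X] (ht : 0 < t)
    (hts : t < s) (hc : 0 < c) :
    ∃ δ L g : ℝ, 0 < δ ∧ δ ≤ 1 / 2 ∧ δ ^ t ≤ 1 / 2 ∧ 0 < L ∧ 0 < g ∧ g ≤ 1 ∧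
      ∀ (r : ℝ) (ρ : X → ℝ) (Y : Finset X), 0 < r → (∀ j ∈ Y, 0 < ρ j) → (∀ j ∈ Y, ρ j ≤ δ * r) →
        (Y : Set X).Pairwise (fun i j => 4 * ρ i < dist i j) → BallSparse id ρ s 2 (Y : Set X) →
        c * r ^ s ≤ ∑ j ∈ Y, ρ j ^ s →
        ∃ J ⊆ Y, BallSparse id ρ t L (J : Set X) ∧ IsGapSeparated g (J : Set X) ∧
          r ^ t ≤ ∑ j ∈ J, ρ j ^ t := by
  obtain ⟨m, hm, hms⟩ := exists_lt_mul_one_sub_one_div hts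
  set s' := s * (1 - 1 / (m : ℝ))
  set C := (2 / c * (8 * m) ^ s) ^ (1 - 1 / (m : ℝ))
  have hC : 0 ≤ C := by positivity
  obtain ⟨δ, ⟨⟨hδhalf, hδt⟩, hδC⟩, hδ₀⟩ :=
    (((eventually_mul_rpow_lt (C := 1) one_pos one_half_pos).and
      (eventually_mul_rpow_lt (C := 1) ht one_half_pos)).and
      (eventually_mul_rpow_lt (C := C) (sub_pos.2 hms) one_half_pos)).and
        self_mem_nhdsWithin |>.exists
  rw [Real.rpow_one, one_mul] at hδhalf
  rw [one_mul] at hδt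
  have hsmall : C * δ ^ (s' - t) + C * 6 ^ s' / (2 + 2 * (C * 6 ^ s') - 1) < 1 := by
    have h₀ : 0 ≤ C * 6 ^ s' := by positivity
    have : C * 6 ^ s' / (2 + 2 * (C * 6 ^ s') - 1) ≤ 1 / 2 := by
      rw [div_le_div_iff₀ (by linarith) two_pos]
      linarith
    linarith
  have hg₁ : 1 / (8 * m : ℝ) ≤ 1 :=
    div_le_one_of_le₀ (by exact_mod_cast (by omega : 1 ≤ 8 * m)) (by positivity)
  refine ⟨δ, 2 + 2 * (C * 6 ^ s'), 1 / (8 * m), hδ₀, hδhalf.le, hδt.le, by positivity,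
    by positivity, hg₁, fun r ρ Y hr hρ₀ hρ hsep hsparse hY => ?_⟩
  obtain ⟨S, hSY, hgap, μ, hμ⟩ := exists_isFrostmanWeight hm hc hr hρ₀ hsep hsparse hY
  obtain ⟨J, hJS, hJ, hsum⟩ := hμ.exists_ballSparse hC hr ht hms.le (fun x hx => hρ₀ x (hSY hx))
    (fun x hx => hρ x (hSY hx)) (le_of_lt hδ₀) (le_add_of_nonneg_right (by positivity)) hsmall
  exact ⟨J, hJS.trans hSY, hJ, hgap.mono (Finset.coe_subset.2 hJS), hsum⟩

theorem exists_mass_refinement (X : Type*) [MetricSpace X] [TopologicalSpace.SeparableSpace X]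
    (ht : 0 < t) (hts : t < s) :
    ∃ L g : ℝ, 0 < L ∧ 0 < g ∧ g ≤ 1 ∧ ∀ (P : Set X) (Q : ℕ → Set X) (r a : ℝ),
      P ⊆ ⋃ i, Q i → 0 < r →
      ENNReal.ofReal (r ^ s / 4) ≤ hausdorffContent X s P → r ^ t / 2 ≤ a → a ≤ r ^ t →
      ∃ (ρ : X → ℝ) (α : X → ℕ) (b : X → ℝ) (J : Finset X),
        (∀ j ∈ J, 0 < ρ j ∧ ρ j ≤ r / 2 ∧ ENNReal.ofReal (ρ j ^ s / 4) ≤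
          hausdorffContent X s (P ∩ Q (α j) ∩ Metric.closedBall j (ρ j))) ∧
        (J : Set X).Pairwise (fun i j => 4 * ρ i < dist i j) ∧
        BallSparse id ρ t L (J : Set X) ∧ IsGapSeparated g (J : Set X) ∧
        (∀ j ∈ J, ρ j ^ t / 2 ≤ b j ∧ b j ≤ ρ j ^ t) ∧ ∑ j ∈ J, b j = a := by
  obtain ⟨δ, L, g, hδ₀, hδhalf, hδt, hL, hg, hg₁, hsubset⟩ :=
    exists_ballSparse_gapSeparated_subset X ht hts (c := 1 / (8 * (24 ^ s + 60 ^ s)))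
      (by positivity)
  refine ⟨L, g, hL, hg, hg₁, fun P Q r a hPQ hr hP hra har => ?_⟩
  have hM : ENNReal.ofReal ((24 ^ s + 60 ^ s) * (1 / (8 * (24 ^ s + 60 ^ s)) * r ^ s)) <
      hausdorffContent X s P := by
    refine lt_of_lt_of_le ((ENNReal.ofReal_lt_ofReal_iff (by positivity)).2 ?_) hP
    have : 0 < r ^ s := by positivity
    field_simp
    linarith
  obtain ⟨ρ, α, Y, hY, hsep, hsparse, hsum⟩ :=
    exists_heavy_separated_ballSparse (ht.trans hts) (mul_pos hδ₀ hr) hPQ hM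
  obtain ⟨J₁, hJ₁Y, hJ₁sparse, hJ₁gap, hJ₁⟩ := hsubset r ρ Y hr (fun j hj => (hY j hj).1)
    (fun j hj => (hY j hj).2.1) hsep hsparse hsum.le
  have hρt : ∀ j ∈ Y, ρ j ^ t ≤ r ^ t / 2 := fun j hj =>
    calc ρ j ^ t ≤ (δ * r) ^ t := Real.rpow_le_rpow (hY j hj).1.le (hY j hj).2.1 ht.le
      _ = δ ^ t * r ^ t := Real.mul_rpow hδ₀.le hr.le
      _ ≤ 1 / 2 * r ^ t := by gcongr
      _ = r ^ t / 2 := by ring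
  obtain ⟨J, hJJ₁, b, hb, hba⟩ := exists_subset_sum_eq_of_le_sum (J := J₁) (g := fun j => ρ j ^ t)
    (lt_of_lt_of_le (by positivity) hra)
    (fun j hj => Real.rpow_nonneg (hY j (hJ₁Y hj)).1.le t)
    (fun j hj => (hρt j (hJ₁Y hj)).trans hra) (har.trans hJ₁)
  have hJY : J ⊆ Y := hJJ₁.trans hJ₁Y
  refine ⟨ρ, α, b, J, fun j hj => ?_, hsep.mono (Finset.coe_subset.2 hJY),
    hJ₁sparse.mono (Finset.coe_subset.2 hJJ₁), hJ₁gap.mono (Finset.coe_subset.2 hJJ₁), hb, hba⟩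
  obtain ⟨hj₀, hjδ, hjheavy⟩ := hY j (hJY hj)
  refine ⟨hj₀, hjδ.trans ?_, hjheavy⟩
  calc δ * r ≤ 1 / 2 * r := by gcongr
    _ = r / 2 := by ring

end Refinement

section OpenCover

variable {X : Type*}

theorem exists_isOpen_superset_ediam_lt [PseudoEMetricSpace X] {U : Set X} {u : ℝ≥0∞}
    (hU : Metric.ediam U < u) : ∃ W, IsOpen W ∧ U ⊆ W ∧ Metric.ediam W < u := by
  obtain ⟨r, hr, hUr⟩ := ENNReal.lt_iff_exists_add_pos_lt.1 hU
  refine ⟨Metric.thickening (r / 2 : NNReal) U, Metric.isOpen_thickening,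
    Metric.self_subset_thickening (by positivity) U,
    (Metric.ediam_thickening_le (r / 2)).trans_lt (lt_of_eq_of_lt ?_ hUr)⟩
  norm_cast
  rw [mul_div_cancel₀ r two_ne_zero]

theorem exists_isOpen_superset_rpow_le [PseudoEMetricSpace X] {t : ℝ} (ht : 0 < t) {U : Set X}
    {ε : NNReal} (hε : 0 < ε) (hU : Metric.ediam U ≠ ⊤) :
    ∃ (W : Set X) (u : NNReal), IsOpen W ∧ U ⊆ W ∧ Metric.ediam W ≤ u ∧ 0 < u ∧
      (u : ℝ≥0∞) ^ t ≤ Metric.ediam U ^ t + ε := by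
  have hfin : Metric.ediam U ^ t ≠ ⊤ := ENNReal.rpow_ne_top_of_nonneg ht.le hU
  have hlt : Metric.ediam U < (Metric.ediam U ^ t + ε) ^ t⁻¹ :=
    (ENNReal.lt_rpow_inv_iff ht).2 (ENNReal.lt_add_right hfin (by simpa using hε.ne'))
  obtain ⟨u, hUu, hu⟩ := ENNReal.lt_iff_exists_nnreal_btwn.1 hlt
  obtain ⟨W, hWo, hUW, hW⟩ := exists_isOpen_superset_ediam_lt hUu
  exact ⟨W, u, hWo, hUW, hW.le, ENNReal.coe_pos.1 (bot_le.trans_lt hUu),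
    ((ENNReal.lt_rpow_inv_iff ht).1 hu).le⟩

theorem exists_finite_open_cover_of_hausdorffContent_lt [PseudoEMetricSpace X] {t : ℝ}
    (ht : 0 < t) {K : Set X} (hK : IsCompact K) {c : ℝ≥0∞} (hc : hausdorffContent X t K < c) :
    ∃ (F : Finset ℕ) (W : ℕ → Set X) (u : ℕ → NNReal), K ⊆ ⋃ i ∈ F, W i ∧
      (∀ i, IsOpen (W i) ∧ Metric.ediam (W i) ≤ u i ∧ 0 < u i) ∧
      ∑ i ∈ F, (u i : ℝ≥0∞) ^ t < c := by
  obtain ⟨U, hKU, hU⟩ := exists_cover_of_hausdorffContent_lt ht hc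
  obtain ⟨η, hη, hUη⟩ := ENNReal.lt_iff_exists_add_pos_lt.1 hU
  obtain ⟨ε, hε, hεη⟩ := ENNReal.exists_pos_sum_of_countable (ENNReal.coe_ne_zero.2 hη.ne') ℕ
  have hfin (i : ℕ) : Metric.ediam (U i) ≠ ⊤ := fun h => hU.ne_top <|
    ENNReal.tsum_eq_top_of_eq_top ⟨i, by rw [h, ENNReal.top_rpow_of_pos ht]⟩
  choose W u hWo hUW hW hu hut using
    fun i => exists_isOpen_superset_rpow_le ht (hε i) (hfin i)
  obtain ⟨F, hF⟩ := hK.elim_finite_subcover W hWo (hKU.trans (Set.iUnion_mono hUW))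
  refine ⟨F, W, u, hF, fun i => ⟨hWo i, hW i, hu i⟩, ?_⟩
  calc ∑ i ∈ F, (u i : ℝ≥0∞) ^ t
      ≤ ∑' i, (Metric.ediam (U i) ^ t + ε i) :=
        (Finset.sum_le_sum fun i _ => hut i).trans (ENNReal.sum_le_tsum F)
    _ = ∑' i, Metric.ediam (U i) ^ t + ∑' i, (ε i : ℝ≥0∞) := ENNReal.tsum_add
    _ ≤ ∑' i, Metric.ediam (U i) ^ t + η := by gcongr
    _ < c := hUη

end OpenCover

/-- A forest of nonempty closed sets in `X` indexed by nodes `v : V`: each node has a finite set of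
well separated, gap separated children inside it, of at most half its radius, over which its mass,
comparable to `radius v ^ t`, is distributed. No root is singled out: every node is the root of the
tree of its descendants. -/
structure BallForest (X V : Type*) [PseudoMetricSpace X] (t L c : ℝ) where
  children : V → Finset V
  carrier : V → Set X
  center : V → X
  radius : V → ℝ
  mass : V → ℝ
  isClosed_carrier : ∀ v, IsClosed (carrier v)
  carrier_nonempty : ∀ v, (carrier v).Nonempty
  carrier_subset_closedBall : ∀ v, carrier v ⊆ Metric.closedBall (center v) (radius v)
  radius_pos : ∀ v, 0 < radius v
  half_radius_rpow_le_mass : ∀ v, radius v ^ t / 2 ≤ mass v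
  mass_le_radius_rpow : ∀ v, mass v ≤ radius v ^ t
  carrier_child_subset : ∀ v, ∀ w ∈ children v, carrier w ⊆ carrier v
  radius_child_le : ∀ v, ∀ w ∈ children v, radius w ≤ radius v / 2
  pairwise_children : ∀ v, (children v : Set V).Pairwise fun w w' =>
    4 * radius w < dist (center w) (center w')
  ballSparse_children : ∀ v, BallSparse center radius t L (children v : Set V)
  isGapSeparated_center_children : ∀ v, IsGapSeparated c (center '' (children v : Set V))
  sum_mass_children : ∀ v, ∑ w ∈ children v, mass w = mass v

namespace BallForest

section Basic

variable {X V : Type*} [PseudoMetricSpace X] {t L c : ℝ} (T : BallForest X V t L c)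
  {v w w' : V} {p q : X} {n : ℕ}

theorem mass_pos (v : V) : 0 < T.mass v :=
  lt_of_lt_of_le (half_pos (Real.rpow_pos_of_pos (T.radius_pos v) t))
    (T.half_radius_rpow_le_mass v)

theorem dist_le_of_mem_carrier (hp : p ∈ T.carrier v) (hq : q ∈ T.carrier v) :
    dist p q ≤ 2 * T.radius v :=
  (dist_triangle_right p q (T.center v)).trans <| by
    linarith [Metric.mem_closedBall.1 (T.carrier_subset_closedBall v hp),
      Metric.mem_closedBall.1 (T.carrier_subset_closedBall v hq)]

theorem isBounded_carrier (v : V) : Bornology.IsBounded (T.carrier v) :=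
  Metric.isBounded_closedBall.subset (T.carrier_subset_closedBall v)

theorem ediam_carrier_le (v : V) :
    Metric.ediam (T.carrier v) ≤ ENNReal.ofReal (2 * T.radius v) :=
  Metric.ediam_le fun p hp q hq => by
    rw [edist_dist]
    exact ENNReal.ofReal_le_ofReal (T.dist_le_of_mem_carrier hp hq)

theorem children_nonempty (v : V) : (T.children v).Nonempty :=
  Finset.nonempty_of_sum_ne_zero ((T.sum_mass_children v).trans_ne (T.mass_pos v).ne')

theorem dist_center_siblings (hw : w ∈ T.children v) (hw' : w' ∈ T.children v) (hne : w ≠ w')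
    (hp : p ∈ T.carrier w) (hq : q ∈ T.carrier w') :
    dist (T.center w) (T.center w') / 2 ≤ dist p q ∧
      dist p q ≤ 3 / 2 * dist (T.center w) (T.center w') := by
  have hsep : 4 * T.radius w < dist _ _ := T.pairwise_children v hw hw' hne
  have hsep' : 4 * T.radius w' < dist _ _ := T.pairwise_children v hw' hw hne.symm
  have hpw := Metric.mem_closedBall.1 (T.carrier_subset_closedBall w hp)
  have hqw := Metric.mem_closedBall.1 (T.carrier_subset_closedBall w' hq)
  have hle := dist_triangle4 (T.center w) p q (T.center w')
  have hge := dist_triangle4 p (T.center w) (T.center w') q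
  rw [dist_comm (T.center w) p] at hle
  rw [dist_comm (T.center w') (T.center w)] at hsep'
  rw [dist_comm (T.center w') q] at hge
  constructor <;> linarith

theorem two_mul_radius_lt_dist_siblings (hw : w ∈ T.children v) (hw' : w' ∈ T.children v)
    (hne : w ≠ w') (hp : p ∈ T.carrier w) (hq : q ∈ T.carrier w') :
    2 * T.radius w < dist p q := by
  linarith [T.pairwise_children v hw hw' hne, (T.dist_center_siblings hw hw' hne hp hq).1]

theorem eq_of_mem_carrier_siblings (hw : w ∈ T.children v) (hw' : w' ∈ T.children v)
    (hp : p ∈ T.carrier w) (hp' : p ∈ T.carrier w') : w = w' := by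
  by_contra hne
  have := T.two_mul_radius_lt_dist_siblings hw hw' hne hp hp'
  rw [dist_self] at this
  linarith [T.radius_pos w]

open Classical in
/-- The nodes exactly `n` generations below `v`. -/
noncomputable def descendants : ℕ → V → Finset V
  | 0, v => {v}
  | n + 1, v => (T.children v).biUnion (descendants n)

@[simp] theorem descendants_zero : T.descendants 0 v = {v} := rfl

@[simp] theorem mem_descendants_succ :
    w ∈ T.descendants (n + 1) v ↔ ∃ v' ∈ T.children v, w ∈ T.descendants n v' := by
  simp [descendants]

theorem carrier_descendant_subset :
    ∀ {n : ℕ} {v : V}, w ∈ T.descendants n v → T.carrier w ⊆ T.carrier v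
  | 0, v, hw => by rw [Finset.mem_singleton.1 hw]
  | n + 1, v, hw => by
    obtain ⟨v', hv', hw⟩ := T.mem_descendants_succ.1 hw
    exact (carrier_descendant_subset hw).trans (T.carrier_child_subset v v' hv')

theorem radius_descendant_le :
    ∀ {n : ℕ} {v : V}, w ∈ T.descendants n v → T.radius w ≤ (1 / 2) ^ n * T.radius v
  | 0, v, hw => by rw [Finset.mem_singleton.1 hw, pow_zero, one_mul]
  | n + 1, v, hw => by
    obtain ⟨v', hv', hw⟩ := T.mem_descendants_succ.1 hw
    calc T.radius w ≤ (1 / 2) ^ n * T.radius v' := radius_descendant_le hw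
      _ ≤ (1 / 2) ^ n * (T.radius v / 2) := by
          gcongr
          exact T.radius_child_le v v' hv'
      _ = (1 / 2) ^ (n + 1) * T.radius v := by ring

theorem tendsto_pow_mul_radius (v : V) :
    Filter.Tendsto (fun n => 2 * ((1 / 2) ^ n * T.radius v)) Filter.atTop (nhds 0) := by
  simpa using ((tendsto_pow_atTop_nhds_zero_of_lt_one (r := (1 / 2 : ℝ)) (by norm_num)
    (by norm_num)).mul_const (T.radius v)).const_mul 2

theorem two_mul_pow_mul_radius_child_le (hw : w ∈ T.children v) (n : ℕ) :
    2 * ((1 / 2) ^ n * T.radius w) ≤ 2 * ((1 / 2) ^ (n + 1) * T.radius v) := by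
  rw [pow_succ, mul_assoc _ (1 / 2 : ℝ)]
  gcongr
  linarith [T.radius_child_le v w hw]

theorem sum_descendants_succ (g : V → ℝ) (n : ℕ) (v : V) :
    ∑ w ∈ T.descendants (n + 1) v, g w = ∑ v' ∈ T.children v, ∑ w ∈ T.descendants n v', g w := by
  classical
  rw [descendants, Finset.sum_biUnion]
  intro v₁ hv₁ v₂ hv₂ hne
  refine Finset.disjoint_left.2 fun w hw₁ hw₂ => hne ?_
  obtain ⟨p, hp⟩ := T.carrier_nonempty w
  exact T.eq_of_mem_carrier_siblings hv₁ hv₂ (T.carrier_descendant_subset hw₁ hp)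
    (T.carrier_descendant_subset hw₂ hp)

theorem sum_mass_descendants : ∀ n v, ∑ w ∈ T.descendants n v, T.mass w = T.mass v
  | 0, v => by rw [descendants_zero, Finset.sum_singleton]
  | n + 1, v => by
    rw [sum_descendants_succ, ← T.sum_mass_children v]
    exact Finset.sum_congr rfl fun v' _ => sum_mass_descendants n v'

end Basic

section LimitSet

variable {X V : Type*} [PseudoMetricSpace X] {t L c : ℝ} (T : BallForest X V t L c)
  {v w : V} {p q : X} {n : ℕ}

/-- The points that lie in a carrier of every generation below `v`. -/
def limitSet (v : V) : Set X := ⋂ n, ⋃ w ∈ T.descendants n v, T.carrier w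

theorem mem_limitSet : p ∈ T.limitSet v ↔ ∀ n, ∃ w ∈ T.descendants n v, p ∈ T.carrier w := by
  simp [limitSet]

theorem limitSet_subset_carrier (v : V) : T.limitSet v ⊆ T.carrier v := fun p hp => by
  simpa using T.mem_limitSet.1 hp 0

theorem limitSet_child_subset (hw : w ∈ T.children v) : T.limitSet w ⊆ T.limitSet v := by
  refine fun p hp => T.mem_limitSet.2 fun n => ?_
  cases n with
  | zero => exact ⟨v, by simp, T.carrier_child_subset v w hw (T.limitSet_subset_carrier w hp)⟩
  | succ n =>
    obtain ⟨w', hw', hpw'⟩ := T.mem_limitSet.1 hp n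
    exact ⟨w', T.mem_descendants_succ.2 ⟨w, hw, hw'⟩, hpw'⟩

theorem exists_child_mem_limitSet (hp : p ∈ T.limitSet v) :
    ∃ w ∈ T.children v, p ∈ T.limitSet w := by
  have hchild (n : ℕ) : ∃ w ∈ T.children v, ∃ w' ∈ T.descendants n w, p ∈ T.carrier w' := by
    obtain ⟨w', hw', hpw'⟩ := T.mem_limitSet.1 hp (n + 1)
    obtain ⟨w, hw, hww'⟩ := T.mem_descendants_succ.1 hw'
    exact ⟨w, hw, w', hww', hpw'⟩
  choose w hw w' hw' hpw' using hchild
  have hpw (n : ℕ) : p ∈ T.carrier (w n) := T.carrier_descendant_subset (hw' n) (hpw' n)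
  refine ⟨w 0, hw 0, T.mem_limitSet.2 fun n => ⟨w' n, ?_, hpw' n⟩⟩
  exact T.eq_of_mem_carrier_siblings (hw n) (hw 0) (hpw n) (hpw 0) ▸ hw' n

theorem exists_branch_of_mem_limitSet (hp : p ∈ T.limitSet v) :
    ∃ b : ℕ → V, b 0 = v ∧ (∀ n, b (n + 1) ∈ T.children (b n)) ∧ ∀ n, p ∈ T.carrier (b n) := by
  have hchild (w : V) (hw : p ∈ T.limitSet w) := T.exists_child_mem_limitSet hw
  have : Nonempty V := ⟨v⟩
  choose! next hnext hpnext using hchild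
  have hmem (n : ℕ) : p ∈ T.limitSet (next^[n] v) := by
    induction n with
    | zero => exact hp
    | succ n ih => exact Function.iterate_succ_apply' next n v ▸ hpnext _ ih
  refine ⟨fun n => next^[n] v, rfl, fun n => ?_, fun n => T.limitSet_subset_carrier _ (hmem n)⟩
  simpa only [Function.iterate_succ_apply'] using hnext _ (hmem n)

theorem isClosed_limitSet (v : V) : IsClosed (T.limitSet v) :=
  isClosed_iInter fun n => (T.descendants n v).finite_toSet.isClosed_biUnion fun w _ =>
    T.isClosed_carrier w

theorem isCompact_limitSet [CompleteSpace X] (v : V) : IsCompact (T.limitSet v) := by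
  refine TotallyBounded.isCompact_of_isClosed (Metric.totallyBounded_iff.2 fun ε hε => ?_)
    (T.isClosed_limitSet v)
  obtain ⟨n, hn⟩ := ((T.tendsto_pow_mul_radius v).eventually_lt_const hε).exists
  refine ⟨T.center '' T.descendants n v, (T.descendants n v).finite_toSet.image _, fun p hp => ?_⟩
  obtain ⟨w, hw, hpw⟩ := T.mem_limitSet.1 hp n
  refine Set.mem_iUnion₂.2 ⟨_, Set.mem_image_of_mem _ hw, Metric.mem_ball.2 ?_⟩
  have hpos := T.radius_pos w
  linarith [T.radius_descendant_le hw,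
    Metric.mem_closedBall.1 (T.carrier_subset_closedBall w hpw)]

theorem limitSet_nonempty [CompleteSpace X] (v : V) : (T.limitSet v).Nonempty := by
  choose next hnext using T.children_nonempty
  have hmem (n : ℕ) : ∀ v, next^[n] v ∈ T.descendants n v := by
    induction n with
    | zero => simp
    | succ n ih => exact fun v => T.mem_descendants_succ.2 ⟨next v, hnext v, ih (next v)⟩
  have hanti : Antitone fun n => T.carrier (next^[n] v) := antitone_nat_of_succ_le fun n => by
    rw [Function.iterate_succ_apply']
    exact T.carrier_child_subset _ _ (hnext _)
  have hdiam (n : ℕ) : Metric.diam (T.carrier (next^[n] v)) ≤ 2 * ((1 / 2) ^ n * T.radius v) :=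
    Metric.diam_le_of_forall_dist_le (by have := T.radius_pos v; positivity) fun p hp q hq =>
      (T.dist_le_of_mem_carrier hp hq).trans (by linarith [T.radius_descendant_le (hmem n v)])
  obtain ⟨p, hp⟩ := Metric.nonempty_iInter_of_nonempty_biInter
    (fun n => T.isClosed_carrier (next^[n] v)) (fun n => T.isBounded_carrier _)
    (fun N => (T.carrier_nonempty (next^[N] v)).mono (Set.subset_iInter₂ fun n hn => hanti hn))
    (squeeze_zero (fun n => Metric.diam_nonneg) hdiam (T.tendsto_pow_mul_radius v))
  exact ⟨p, T.mem_limitSet.2 fun n => ⟨next^[n] v, hmem n v, Set.mem_iInter.1 hp n⟩⟩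

theorem limitSet_descendant_subset :
    ∀ {n : ℕ} {v : V}, w ∈ T.descendants n v → T.limitSet w ⊆ T.limitSet v
  | 0, v, hw => by rw [Finset.mem_singleton.1 hw]
  | n + 1, v, hw => by
    obtain ⟨v', hv', hw⟩ := T.mem_descendants_succ.1 hw
    exact (limitSet_descendant_subset hw).trans (T.limitSet_child_subset hv')

end LimitSet

end BallForest

namespace BallForest

section Gap

variable {X V : Type*} [PseudoMetricSpace X] {t L c : ℝ} (T : BallForest X V t L c)
  {v w w' : V} {y z : X}

theorem exists_gap_of_mem_siblings (hc : 0 ≤ c) (hw : w ∈ T.children v) (hw' : w' ∈ T.children v)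
    (hne : w ≠ w') (hy : y ∈ T.limitSet w) (hz : z ∈ T.limitSet w') :
    ∃ C, y ∈ C ∧ z ∉ C ∧
      ∀ a ∈ T.limitSet v ∩ C, ∀ b ∈ T.limitSet v \ C, c / 3 * dist y z ≤ dist a b := by
  have hcenter : T.center w ≠ T.center w' := fun h => by
    have : 4 * T.radius w < dist _ _ := T.pairwise_children v hw hw' hne
    rw [h, dist_self] at this
    linarith [T.radius_pos w]
  obtain ⟨D, hwD, hw'D, hD⟩ := T.isGapSeparated_center_children v
    (Set.mem_image_of_mem _ hw) (Set.mem_image_of_mem _ hw') hcenter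
  refine ⟨⋃ p ∈ T.children v, ⋃ _ : T.center p ∈ D, T.limitSet p, ?_, ?_, ?_⟩
  · simp only [Set.mem_iUnion]
    exact ⟨w, hw, hwD, hy⟩
  · simp only [Set.mem_iUnion, not_exists]
    rintro p hp hpD hzp
    exact hw'D (T.eq_of_mem_carrier_siblings hp hw' (T.limitSet_subset_carrier p hzp)
      (T.limitSet_subset_carrier w' hz) ▸ hpD)
  rintro a ⟨-, ha⟩ b ⟨hb, hbC⟩
  simp only [Set.mem_iUnion] at ha hbC
  obtain ⟨p, hp, hpD, hap⟩ := ha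
  obtain ⟨q, hq, hbq⟩ := T.exists_child_mem_limitSet hb
  have hqD : T.center q ∉ D := fun h => hbC ⟨q, hq, h, hbq⟩
  have hpq : p ≠ q := fun h => hqD (h ▸ hpD)
  calc c / 3 * dist y z ≤ c / 3 * (3 / 2 * dist (T.center w) (T.center w')) := by
        gcongr
        exact (T.dist_center_siblings hw hw' hne (T.limitSet_subset_carrier w hy)
          (T.limitSet_subset_carrier w' hz)).2
    _ = c * dist (T.center w) (T.center w') / 2 := by ring
    _ ≤ dist (T.center p) (T.center q) / 2 := by
        gcongr
        exact hD _ ⟨Set.mem_image_of_mem _ hp, hpD⟩ _ ⟨Set.mem_image_of_mem _ hq, hqD⟩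
    _ ≤ dist a b := (T.dist_center_siblings hp hq hpq (T.limitSet_subset_carrier p hap)
        (T.limitSet_subset_carrier q hbq)).1

theorem exists_gap_of_exists_gap_child (hc : c ≤ 3) (hw : w ∈ T.children v)
    (hy : y ∈ T.limitSet w) (hz : z ∈ T.limitSet w)
    (hgap : ∃ C, y ∈ C ∧ z ∉ C ∧
      ∀ a ∈ T.limitSet w ∩ C, ∀ b ∈ T.limitSet w \ C, c / 3 * dist y z ≤ dist a b) :
    ∃ C, y ∈ C ∧ z ∉ C ∧
      ∀ a ∈ T.limitSet v ∩ C, ∀ b ∈ T.limitSet v \ C, c / 3 * dist y z ≤ dist a b := by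
  obtain ⟨C, hyC, hzC, hC⟩ := hgap
  refine ⟨C ∩ T.limitSet w, ⟨hyC, hy⟩, fun h => hzC h.1, ?_⟩
  rintro a ⟨-, haC, haw⟩ b ⟨hb, hbC⟩
  by_cases hbw : b ∈ T.limitSet w
  · exact hC a ⟨haw, haC⟩ b ⟨hbw, fun h => hbC ⟨h, hbw⟩⟩
  obtain ⟨q, hq, hbq⟩ := T.exists_child_mem_limitSet hb
  calc c / 3 * dist y z ≤ 1 * dist y z := by gcongr; linarith
    _ ≤ 2 * T.radius w := by
        rw [one_mul]
        exact T.dist_le_of_mem_carrier (T.limitSet_subset_carrier w hy)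
          (T.limitSet_subset_carrier w hz)
    _ ≤ dist a b := (T.two_mul_radius_lt_dist_siblings hw hq (fun h => hbw (h ▸ hbq))
        (T.limitSet_subset_carrier w haw) (T.limitSet_subset_carrier q hbq)).le

theorem isGapSeparated_limitSet {X V : Type*} [MetricSpace X] (T : BallForest X V t L c)
    (hc₀ : 0 ≤ c) (hc : c ≤ 3) (v : V) : IsGapSeparated (c / 3) (T.limitSet v) := by
  intro y hy z hz hyz
  obtain ⟨n, hn⟩ := ((T.tendsto_pow_mul_radius v).eventually_lt_const (dist_pos.2 hyz)).exists
  induction n generalizing v with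
  | zero =>
    rw [pow_zero, one_mul] at hn
    exact absurd (T.dist_le_of_mem_carrier (T.limitSet_subset_carrier v hy)
      (T.limitSet_subset_carrier v hz)) hn.not_ge
  | succ n ih =>
    obtain ⟨w, hw, hyw⟩ := T.exists_child_mem_limitSet hy
    obtain ⟨w', hw', hzw'⟩ := T.exists_child_mem_limitSet hz
    by_cases hne : w = w'
    · subst hne
      refine T.exists_gap_of_exists_gap_child hc hw hyw hzw' (ih w hyw hzw' ?_)
      exact hn.trans_le' (T.two_mul_pow_mul_radius_child_le hw n)
    · exact T.exists_gap_of_mem_siblings hc₀ hw hw' hne hyw hzw'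

end Gap

section TouchMass

variable {X V : Type*} [PseudoMetricSpace X] {t L c : ℝ} (T : BallForest X V t L c)
  {v : V} {U : Set X} {u : ℝ}

/-- The total mass of those nodes `n` generations below `v` whose carrier meets `U`. -/
noncomputable def touchMass (U : Set X) (n : ℕ) (v : V) : ℝ :=
  ∑ w ∈ T.descendants n v, {w | (T.carrier w ∩ U).Nonempty}.indicator T.mass w

theorem touchMass_zero_of_nonempty (hv : (T.carrier v ∩ U).Nonempty) :
    T.touchMass U 0 v = T.mass v := by
  rw [touchMass, descendants_zero, Finset.sum_singleton, Set.indicator_of_mem]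
  exact hv

theorem touchMass_eq_zero (hv : ¬(T.carrier v ∩ U).Nonempty) (n : ℕ) : T.touchMass U n v = 0 :=
  Finset.sum_eq_zero fun _ hw => Set.indicator_of_notMem
    (fun h => hv (h.mono (Set.inter_subset_inter_left U (T.carrier_descendant_subset hw)))) _

theorem touchMass_zero_le : T.touchMass U 0 v ≤ T.mass v := by
  by_cases hv : (T.carrier v ∩ U).Nonempty
  · exact (T.touchMass_zero_of_nonempty hv).le
  · exact (T.touchMass_eq_zero hv 0).trans_le (T.mass_pos v).le

theorem touchMass_succ (n : ℕ) :
    T.touchMass U (n + 1) v = ∑ w ∈ T.children v, T.touchMass U n w :=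
  T.sum_descendants_succ _ n v

theorem touchMass_succ_le : ∀ (n : ℕ) (v : V), T.touchMass U (n + 1) v ≤ T.touchMass U n v
  | 0, v => by
    by_cases hv : (T.carrier v ∩ U).Nonempty
    · rw [touchMass_succ, touchMass_zero_of_nonempty T hv, ← T.sum_mass_children v]
      exact Finset.sum_le_sum fun w _ => T.touchMass_zero_le
    · rw [T.touchMass_eq_zero hv, T.touchMass_eq_zero hv]
  | n + 1, v => by
    rw [touchMass_succ, T.touchMass_succ n]
    exact Finset.sum_le_sum fun w _ => touchMass_succ_le n w

theorem touchMass_antitone (U : Set X) (v : V) : Antitone fun n => T.touchMass U n v :=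
  antitone_nat_of_succ_le fun n => T.touchMass_succ_le n v

open Classical in
theorem touchMass_one_le_of_two_touching (hu : 0 < u)
    (hU : ∀ p ∈ U, ∀ q ∈ U, dist p q ≤ u) {w w' : V} (hw : w ∈ T.children v)
    (hw' : w' ∈ T.children v) (hne : w ≠ w') (hwU : (T.carrier w ∩ U).Nonempty)
    (hw'U : (T.carrier w' ∩ U).Nonempty) : T.touchMass U 1 v ≤ L * (2 * u) ^ t := by
  obtain ⟨y, -, hyU⟩ := id hwU
  set F := {p ∈ T.children v | (T.carrier p ∩ U).Nonempty}
  have hF : ∀ p ∈ F, dist (T.center p) y ≤ 2 * u ∧ T.radius p ≤ 2 * u := by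
    intro p hp
    obtain ⟨hp, z, hzp, hzU⟩ := Finset.mem_filter.1 hp
    obtain ⟨q, hq, hpq, x, hxq, hxU⟩ :
        ∃ q ∈ T.children v, p ≠ q ∧ (T.carrier q ∩ U).Nonempty := by
      by_cases hpw : p = w
      · exact ⟨w', hw', hpw ▸ hne, hw'U⟩
      · exact ⟨w, hw, hpw, hwU⟩
    have hradius := (T.two_mul_radius_lt_dist_siblings hp hq hpq hzp hxq).le.trans
      (hU z hzU x hxU)
    have hz := Metric.mem_closedBall'.1 (T.carrier_subset_closedBall p hzp)
    have := dist_triangle (T.center p) z y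
    constructor <;> linarith [hU z hzU y hyU, T.radius_pos p]
  calc T.touchMass U 1 v = ∑ p ∈ F, T.mass p := by
        rw [touchMass_succ, Finset.sum_filter]
        refine Finset.sum_congr rfl fun p _ => ?_
        split_ifs with hp
        exacts [T.touchMass_zero_of_nonempty hp, T.touchMass_eq_zero hp 0]
    _ ≤ ∑ p ∈ F, T.radius p ^ t := Finset.sum_le_sum fun p _ => T.mass_le_radius_rpow p
    _ ≤ L * (2 * u) ^ t := T.ballSparse_children v y (2 * u) (by positivity) F
        (Finset.coe_subset.2 (Finset.filter_subset _ _)) hF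

theorem exists_child_forall_ne_not_touching
    (hsub : {w | w ∈ T.children v ∧ (T.carrier w ∩ U).Nonempty}.Subsingleton) :
    ∃ w ∈ T.children v, ∀ p ∈ T.children v, p ≠ w → ¬(T.carrier p ∩ U).Nonempty := by
  by_cases hex : ∃ w ∈ T.children v, (T.carrier w ∩ U).Nonempty
  · obtain ⟨w, hw⟩ := hex
    exact ⟨w, hw.1, fun p hp hpw hpU => hpw (hsub ⟨hp, hpU⟩ hw)⟩
  · obtain ⟨w, hw⟩ := T.children_nonempty v
    exact ⟨w, hw, fun p hp _ hpU => hex ⟨p, hp, hpU⟩⟩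

/-- Descend from `v` until `U` touches two children of a node, or the node is smaller than `U`. -/
theorem exists_touchMass_le (ht : 0 ≤ t) (hL : 0 ≤ L) (hu : 0 < u)
    (hU : ∀ p ∈ U, ∀ q ∈ U, dist p q ≤ u) (v : V) :
    ∃ n, T.touchMass U n v ≤ (1 + L * 2 ^ t) * u ^ t := by
  have hut : 0 ≤ u ^ t := Real.rpow_nonneg hu.le t
  have hL₂ : 0 ≤ L * 2 ^ t := by positivity
  obtain ⟨N, hN⟩ := ((T.tendsto_pow_mul_radius v).eventually_lt_const hu).exists
  induction N generalizing v with
  | zero =>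
    refine ⟨0, T.touchMass_zero_le.trans ((T.mass_le_radius_rpow v).trans ?_)⟩
    have hradius : T.radius v ≤ u := by linarith [T.radius_pos v]
    exact (Real.rpow_le_rpow (T.radius_pos v).le hradius ht).trans
      (le_mul_of_one_le_left hut (by linarith))
  | succ N ih =>
    by_cases hsub : {w | w ∈ T.children v ∧ (T.carrier w ∩ U).Nonempty}.Subsingleton
    · obtain ⟨w, hw, hothers⟩ := T.exists_child_forall_ne_not_touching hsub
      obtain ⟨n, hn⟩ := ih w (hN.trans_le' (T.two_mul_pow_mul_radius_child_le hw N))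
      refine ⟨n + 1, (T.touchMass_succ n).trans_le (le_of_eq_of_le ?_ hn)⟩
      exact Finset.sum_eq_single_of_mem w hw fun p hp hpw =>
        T.touchMass_eq_zero (hothers p hp hpw) n
    · obtain ⟨w, ⟨hw, hwU⟩, w', ⟨hw', hw'U⟩, hne⟩ := Set.not_subsingleton_iff.1 hsub
      refine ⟨1, (T.touchMass_one_le_of_two_touching hu hU hw hw' hne hwU hw'U).trans ?_⟩
      rw [Real.mul_rpow zero_le_two hu.le, ← mul_assoc]
      exact mul_le_mul_of_nonneg_right (by linarith) hut

end TouchMass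

section Measure

variable {X V : Type*} {t L c : ℝ} {v : V}

theorem mass_le_sum_touchMass [PseudoMetricSpace X] [CompleteSpace X]
    (T : BallForest X V t L c) {ι : Type*} {F : Finset ι} {W : ι → Set X}
    (hW : T.limitSet v ⊆ ⋃ i ∈ F, W i) (n : ℕ) :
    T.mass v ≤ ∑ i ∈ F, T.touchMass (W i) n v := by
  rw [← T.sum_mass_descendants n v]
  simp only [touchMass]
  rw [Finset.sum_comm]
  refine Finset.sum_le_sum fun w hw => ?_
  obtain ⟨p, hp⟩ := T.limitSet_nonempty w
  obtain ⟨i, hi, hpi⟩ := Set.mem_iUnion₂.1 (hW (T.limitSet_descendant_subset hw hp))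
  have htouch : w ∈ {w | (T.carrier w ∩ W i).Nonempty} := ⟨p, T.limitSet_subset_carrier w hp, hpi⟩
  rw [← Set.indicator_of_mem htouch T.mass]
  exact Finset.single_le_sum (f := fun i => {w | (T.carrier w ∩ W i).Nonempty}.indicator T.mass w)
    (fun i _ => Set.indicator_nonneg (fun w _ => (T.mass_pos w).le) w) hi

theorem mass_div_le_hausdorffContent_limitSet [PseudoMetricSpace X] [CompleteSpace X]
    (T : BallForest X V t L c) (ht : 0 < t) (hL : 0 ≤ L) (v : V) :
    ENNReal.ofReal (T.mass v / (1 + L * 2 ^ t)) ≤ hausdorffContent X t (T.limitSet v) := by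
  by_contra! hlt
  obtain ⟨F, W, u, hF, hW, hsum⟩ := exists_finite_open_cover_of_hausdorffContent_lt ht
    (T.isCompact_limitSet v) hlt
  have hdist (i : ℕ) : ∀ p ∈ W i, ∀ q ∈ W i, dist p q ≤ u i := fun p hp q hq => by
    have := (Metric.edist_le_ediam_of_mem hp hq).trans (hW i).2.1
    rwa [edist_nndist, ENNReal.coe_le_coe] at this
  choose n hn using fun i => T.exists_touchMass_le ht.le hL (hW i).2.2 (hdist i) v
  have hC : 0 < 1 + L * 2 ^ t := by positivity
  have hsum' : ∑ i ∈ F, (u i : ℝ) ^ t < T.mass v / (1 + L * 2 ^ t) := by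
    rw [← ENNReal.ofReal_lt_ofReal_iff (div_pos (T.mass_pos v) hC)]
    refine lt_of_eq_of_lt ?_ hsum
    rw [ENNReal.ofReal_sum_of_nonneg fun i _ => by positivity]
    refine Finset.sum_congr rfl fun i _ => ?_
    rw [← ENNReal.ofReal_rpow_of_nonneg (u i).coe_nonneg ht.le, ENNReal.ofReal_coe_nnreal]
  refine lt_irrefl (T.mass v) ?_
  calc T.mass v ≤ ∑ i ∈ F, T.touchMass (W i) (F.sup n) v := T.mass_le_sum_touchMass hF _
    _ ≤ ∑ i ∈ F, (1 + L * 2 ^ t) * (u i : ℝ) ^ t := Finset.sum_le_sum fun i hi =>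
        (T.touchMass_antitone (W i) v (Finset.le_sup hi)).trans (hn i)
    _ = (1 + L * 2 ^ t) * ∑ i ∈ F, (u i : ℝ) ^ t := (Finset.mul_sum ..).symm
    _ < T.mass v := by rwa [mul_comm, ← lt_div_iff₀ hC]

theorem ediam_carrier_rpow_le [PseudoMetricSpace X] (T : BallForest X V t L c) (ht : 0 ≤ t)
    (v : V) : Metric.ediam (T.carrier v) ^ t ≤ ENNReal.ofReal (2 ^ t * 2 * T.mass v) := by
  have hradius := T.radius_pos v
  calc Metric.ediam (T.carrier v) ^ t ≤ ENNReal.ofReal (2 * T.radius v) ^ t :=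
        ENNReal.rpow_le_rpow (T.ediam_carrier_le v) ht
    _ = ENNReal.ofReal (2 ^ t * T.radius v ^ t) := by
        rw [ENNReal.ofReal_rpow_of_nonneg (by positivity) ht, Real.mul_rpow zero_le_two hradius.le]
    _ ≤ ENNReal.ofReal (2 ^ t * 2 * T.mass v) := by
        rw [mul_assoc]
        gcongr
        linarith [T.half_radius_rpow_le_mass v]

theorem hausdorffMeasure_limitSet_lt_top [MetricSpace X] [MeasurableSpace X] [BorelSpace X]
    (T : BallForest X V t L c) (ht : 0 ≤ t) (v : V) : μH[t] (T.limitSet v) < ⊤ := by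
  have hle := Measure.hausdorffMeasure_le_liminf_sum (ι := fun n => T.descendants n v) t
    (T.limitSet v) (l := Filter.atTop) (fun n => ENNReal.ofReal (2 * ((1 / 2) ^ n * T.radius v)))
    (by simpa using ENNReal.tendsto_ofReal (T.tendsto_pow_mul_radius v)) (fun n w => T.carrier w)
    (.of_forall fun n w => (T.ediam_carrier_le w).trans
      (ENNReal.ofReal_le_ofReal (by gcongr; exact T.radius_descendant_le w.2)))
    (.of_forall fun n p hp => by simpa using T.mem_limitSet.1 hp n)
  have hsum (n : ℕ) : ∑ w : T.descendants n v, Metric.ediam (T.carrier w) ^ t ≤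
      ENNReal.ofReal (2 ^ t * 2 * T.mass v) :=
    calc ∑ w : T.descendants n v, Metric.ediam (T.carrier w) ^ t
        = ∑ w ∈ T.descendants n v, Metric.ediam (T.carrier w) ^ t :=
          Finset.sum_coe_sort _ fun w => Metric.ediam (T.carrier w) ^ t
      _ ≤ ∑ w ∈ T.descendants n v, ENNReal.ofReal (2 ^ t * 2 * T.mass w) :=
          Finset.sum_le_sum fun w _ => T.ediam_carrier_rpow_le ht w
      _ = ENNReal.ofReal (2 ^ t * 2 * T.mass v) := by
          rw [← ENNReal.ofReal_sum_of_nonneg fun w _ => by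
            have := T.mass_pos w
            positivity, ← Finset.mul_sum, T.sum_mass_descendants]
  calc μH[t] (T.limitSet v)
      ≤ Filter.liminf (fun _ : ℕ => ENNReal.ofReal (2 ^ t * 2 * T.mass v)) Filter.atTop :=
        hle.trans (Filter.liminf_le_liminf (.of_forall hsum))
    _ < ⊤ := by simp

theorem hausdorffMeasure_limitSet_pos [MetricSpace X] [CompleteSpace X] [MeasurableSpace X]
    [BorelSpace X] (T : BallForest X V t L c) (ht : 0 < t) (hL : 0 ≤ L) (v : V) :
    0 < μH[t] (T.limitSet v) :=
  have := T.mass_pos v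
  calc 0 < ENNReal.ofReal (T.mass v / (1 + L * 2 ^ t)) := ENNReal.ofReal_pos.2 (by positivity)
    _ ≤ hausdorffContent X t (T.limitSet v) := T.mass_div_le_hausdorffContent_limitSet ht hL v
    _ ≤ μH[t] (T.limitSet v) := hausdorffContent_le_hausdorffMeasure

end Measure

end BallForest

section Cylinder

open PiNat

theorem exists_forall_mem_cylinder {a : ℕ → ℕ → ℕ} {d : ℕ → ℕ} (hd : StrictMono d)
    (ha : ∀ n, a (n + 1) ∈ cylinder (E := fun _ => ℕ) (a n) (d n)) :
    ∃ σ, ∀ n, σ ∈ cylinder (E := fun _ => ℕ) (a n) (d n) := by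
  have hmem (n m : ℕ) : a (n + m) ∈ cylinder (E := fun _ => ℕ) (a n) (d n) := by
    induction m with
    | zero => exact self_mem_cylinder _ _
    | succ m ih =>
      rw [← mem_cylinder_iff_eq.1 ih]
      exact cylinder_anti _ (hd.monotone (Nat.le_add_right n m)) (ha (n + m))
  refine ⟨fun i => a (i + 1) i, fun n => mem_cylinder_iff.2 fun i hi => ?_⟩
  rcases le_total n (i + 1) with h | h
  · obtain ⟨m, hm⟩ := Nat.exists_eq_add_of_le h
    rw [hm]
    exact mem_cylinder_iff.1 (hmem n m) i hi
  · obtain ⟨m, rfl⟩ := Nat.exists_eq_add_of_le h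
    exact (mem_cylinder_iff.1 (hmem (i + 1) m) i (hd.le_apply (x := i + 1))).symm

theorem eq_of_forall_mem_closure_image_cylinder {X : Type*} [TopologicalSpace X] [T2Space X]
    {f : (ℕ → ℕ) → X} {σ : ℕ → ℕ} (hf : ContinuousAt f σ) {p : X}
    (hp : ∀ n, p ∈ closure (f '' cylinder (E := fun _ => ℕ) σ n)) : f σ = p := by
  have hcluster : ClusterPt p (Filter.map f (nhds σ)) := by
    refine clusterPt_iff_forall_mem_closure.2 fun U hU => ?_
    obtain ⟨_, ⟨τ, n, rfl⟩, hσ, hsub⟩ :=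
      (isTopologicalBasis_cylinders fun _ => ℕ).mem_nhds_iff.1 (Filter.mem_map.1 hU)
    rw [← mem_cylinder_iff_eq.1 hσ] at hsub
    exact closure_mono (Set.image_subset_iff.2 hsub) (hp n)
  have : (nhds p ⊓ nhds (f σ)).NeBot := hcluster.mono hf
  exact (eq_of_nhds_neBot this).symm

end Cylinder

section HeavyPiece

open PiNat

/-- A node of the Cantor scheme inside `Set.range f`: a subset of the image of the cylinder of
sequences agreeing with `address` below `depth`, lying in a ball whose radius is controlled by its
`s`-dimensional content, together with the mass that it will carry. -/
structure HeavyPiece {X : Type*} [PseudoMetricSpace X] (f : (ℕ → ℕ) → X) (s t : ℝ) where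
  address : ℕ → ℕ
  depth : ℕ
  set : Set X
  center : X
  radius : ℝ
  mass : ℝ
  set_subset_image : set ⊆ f '' cylinder (E := fun _ => ℕ) address depth
  set_subset_closedBall : set ⊆ Metric.closedBall center radius
  radius_pos : 0 < radius
  le_hausdorffContent : ENNReal.ofReal (radius ^ s / 4) ≤ hausdorffContent X s set
  half_radius_rpow_le_mass : radius ^ t / 2 ≤ mass
  mass_le_radius_rpow : mass ≤ radius ^ t

namespace HeavyPiece

variable {X : Type*} {f : (ℕ → ℕ) → X} {s t : ℝ}

theorem set_nonempty [PseudoMetricSpace X] (v : HeavyPiece f s t) : v.set.Nonempty := by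
  have hpos : 0 < v.radius ^ s / 4 := by
    have := v.radius_pos
    positivity
  exact nonempty_of_hausdorffContent_ne_zero
    ((ENNReal.ofReal_pos.2 hpos).trans_le v.le_hausdorffContent).ne'

theorem set_subset_iUnion_image_cylinder [PseudoMetricSpace X] (v : HeavyPiece f s t) :
    v.set ⊆ ⋃ i, f '' cylinder (E := fun _ => ℕ) (Function.update v.address v.depth i)
      (v.depth + 1) := by
  rw [← Set.image_iUnion, iUnion_cylinder_update (E := fun _ => ℕ) v.address v.depth]
  exact v.set_subset_image

/-- The trace of `v` on the image of a cylinder one step deeper and on a ball. -/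
def child [PseudoMetricSpace X] (v : HeavyPiece f s t) (i : ℕ) (x : X) (ρ b : ℝ) (hρ : 0 < ρ)
    (hheavy : ENNReal.ofReal (ρ ^ s / 4) ≤ hausdorffContent X s (v.set ∩ f '' cylinder
      (E := fun _ => ℕ) (Function.update v.address v.depth i) (v.depth + 1) ∩
        Metric.closedBall x ρ))
    (hb : ρ ^ t / 2 ≤ b ∧ b ≤ ρ ^ t) : HeavyPiece f s t where
  address := Function.update v.address v.depth i
  depth := v.depth + 1
  set := v.set ∩ f '' cylinder (E := fun _ => ℕ) (Function.update v.address v.depth i)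
    (v.depth + 1) ∩ Metric.closedBall x ρ
  center := x
  radius := ρ
  mass := b
  set_subset_image := fun _ hp => hp.1.2
  set_subset_closedBall := fun _ hp => hp.2
  radius_pos := hρ
  le_hausdorffContent := hheavy
  half_radius_rpow_le_mass := hb.1
  mass_le_radius_rpow := hb.2

theorem exists_children [MetricSpace X] [TopologicalSpace.SeparableSpace X] (f : (ℕ → ℕ) → X)
    (ht : 0 < t) (hts : t < s) :
    ∃ L g : ℝ, 0 < L ∧ 0 < g ∧ g ≤ 1 ∧ ∀ v : HeavyPiece f s t, ∃ W : Finset (HeavyPiece f s t),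
      (∀ w ∈ W, w.depth = v.depth + 1 ∧
        w.address ∈ cylinder (E := fun _ => ℕ) v.address v.depth ∧
        w.set ⊆ v.set ∧ w.radius ≤ v.radius / 2) ∧
      (W : Set (HeavyPiece f s t)).Pairwise (fun w w' => 4 * w.radius < dist w.center w'.center) ∧
      BallSparse center radius t L (W : Set (HeavyPiece f s t)) ∧
      IsGapSeparated g (center '' (W : Set (HeavyPiece f s t))) ∧
      ∑ w ∈ W, w.mass = v.mass := by
  obtain ⟨L, g, hL, hg, hg₁, hrefine⟩ := exists_mass_refinement X ht hts
  refine ⟨L, g, hL, hg, hg₁, fun v => ?_⟩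
  obtain ⟨ρ, α, b, J, hJ, hsep, hsparse, hgap, hb, hsum⟩ := hrefine v.set _ v.radius v.mass
    v.set_subset_iUnion_image_cylinder v.radius_pos v.le_hausdorffContent
    v.half_radius_rpow_le_mass v.mass_le_radius_rpow
  let piece (j : J) : HeavyPiece f s t :=
    v.child (α j) j (ρ j) (b j) (hJ j j.2).1 (hJ j j.2).2.2 (hb j j.2)
  let W : Finset (HeavyPiece f s t) :=
    J.attach.map ⟨piece, fun i j hij => Subtype.ext (congrArg center hij)⟩
  have hW {w} (hw : w ∈ W) : ∃ j, piece j = w := (Finset.mem_map.1 hw).imp fun _ h => h.2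
  have hmaps : Set.MapsTo center (W : Set (HeavyPiece f s t)) (J : Set X) := fun w hw => by
    obtain ⟨j, rfl⟩ := hW hw
    exact j.2
  have hinj : Set.InjOn center (W : Set (HeavyPiece f s t)) := fun w hw w' hw' h => by
    obtain ⟨j, rfl⟩ := hW hw
    obtain ⟨j', rfl⟩ := hW hw'
    exact congrArg piece (Subtype.ext h)
  have hradius : ∀ w ∈ W, w.radius = ρ w.center := fun w hw => by
    obtain ⟨j, rfl⟩ := hW hw
    rfl
  refine ⟨W, fun w hw => ?_, fun w hw w' hw' hne => ?_,
    hsparse.of_injOn center hmaps hinj (fun _ _ => rfl) hradius, hgap.mono hmaps.image_subset, ?_⟩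
  · obtain ⟨j, rfl⟩ := hW hw
    exact ⟨rfl, update_mem_cylinder (E := fun _ => ℕ) _ _ _, fun p hp => hp.1.1, (hJ j j.2).2.1⟩
  · beta_reduce
    rw [hradius w hw]
    exact hsep (hmaps hw) (hmaps hw') (hinj.ne hw hw' hne)
  · rw [Finset.sum_map, ← hsum]
    exact Finset.sum_attach J b

theorem exists_ballForest [MetricSpace X] [TopologicalSpace.SeparableSpace X] (f : (ℕ → ℕ) → X)
    (ht : 0 < t) (hts : t < s) :
    ∃ L g : ℝ, 0 < L ∧ 0 < g ∧ g ≤ 1 ∧ ∃ T : BallForest X (HeavyPiece f s t) t L g,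
      (∀ v, T.carrier v = closure v.set) ∧
      ∀ v, ∀ w ∈ T.children v, w.depth = v.depth + 1 ∧
        w.address ∈ cylinder (E := fun _ => ℕ) v.address v.depth := by
  obtain ⟨L, g, hL, hg, hg₁, hchildren⟩ := exists_children f ht hts
  choose children hchild hsep hsparse hgap hsum using hchildren
  let T : BallForest X (HeavyPiece f s t) t L g :=
    { children := children
      carrier := fun v => closure v.set
      center := center
      radius := radius
      mass := mass
      isClosed_carrier := fun v => isClosed_closure
      carrier_nonempty := fun v => v.set_nonempty.closure
      carrier_subset_closedBall := fun v =>
        closure_minimal v.set_subset_closedBall Metric.isClosed_closedBall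
      radius_pos := radius_pos
      half_radius_rpow_le_mass := half_radius_rpow_le_mass
      mass_le_radius_rpow := mass_le_radius_rpow
      carrier_child_subset := fun v w hw => closure_mono (hchild v w hw).2.2.1
      radius_child_le := fun v w hw => (hchild v w hw).2.2.2
      pairwise_children := hsep
      ballSparse_children := hsparse
      isGapSeparated_center_children := hgap
      sum_mass_children := hsum }
  exact ⟨L, g, hL, hg, hg₁, T, fun v => rfl,
    fun v w hw => ⟨(hchild v w hw).1, (hchild v w hw).2.1⟩⟩

theorem limitSet_subset_range [MetricSpace X] {L g : ℝ} (hf : Continuous f)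
    {T : BallForest X (HeavyPiece f s t) t L g} (hcarrier : ∀ v, T.carrier v = closure v.set)
    (hchild : ∀ v, ∀ w ∈ T.children v, w.depth = v.depth + 1 ∧
      w.address ∈ cylinder (E := fun _ => ℕ) v.address v.depth) (v : HeavyPiece f s t) :
    T.limitSet v ⊆ Set.range f := by
  intro p hp
  obtain ⟨b, -, hb, hpb⟩ := T.exists_branch_of_mem_limitSet hp
  have hdepth : StrictMono fun n => (b n).depth := strictMono_nat_of_lt_succ fun n => by
    rw [(hchild _ _ (hb n)).1]
    exact Nat.lt_succ_self _
  obtain ⟨σ, hσ⟩ := exists_forall_mem_cylinder hdepth fun n => (hchild _ _ (hb n)).2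
  refine ⟨σ, eq_of_forall_mem_closure_image_cylinder hf.continuousAt fun n => ?_⟩
  have hpn := hpb n
  rw [hcarrier] at hpn
  refine closure_mono ((b n).set_subset_image.trans ?_) hpn
  rw [← mem_cylinder_iff_eq.1 (hσ n)]
  exact Set.image_mono (cylinder_anti σ hdepth.le_apply)

theorem nonempty_of_hausdorffContent_range_ne_zero [PseudoMetricSpace X]
    [TopologicalSpace.SeparableSpace X] (hs : 0 < s)
    (hcontent : hausdorffContent X s (Set.range f) ≠ 0) : Nonempty (HeavyPiece f s t) := by
  have hheavy := hausdorffContent_le_heavyPoints hs one_pos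
    (Q := fun _ : Unit => Set.univ) (E := Set.range f) fun _ _ => Set.mem_iUnion.2 ⟨(), trivial⟩
  obtain ⟨x, -, -, ρ, hρ, -, hxρ⟩ := nonempty_of_hausdorffContent_ne_zero
    ((pos_iff_ne_zero.2 hcontent).trans_le hheavy).ne'
  exact ⟨{ address := 0
           depth := 0
           set := Set.range f ∩ Set.univ ∩ Metric.closedBall x ρ
           center := x
           radius := ρ
           mass := ρ ^ t
           set_subset_image := fun p hp => by simpa using hp.1.1
           set_subset_closedBall := fun _ hp => hp.2
           radius_pos := hρ
           le_hausdorffContent := hxρ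
           half_radius_rpow_le_mass := half_le_self (by positivity)
           mass_le_radius_rpow := le_rfl }⟩

end HeavyPiece

end HeavyPiece

section Analytic

variable {X : Type*} [MetricSpace X] [MeasurableSpace X] [BorelSpace X] {A : Set X} {t : ℝ}

theorem exists_hausdorffContent_ne_zero_of_lt_dimH (ht : 0 ≤ t) (hdim : ENNReal.ofReal t < dimH A) :
    ∃ s, t < s ∧ hausdorffContent X s A ≠ 0 := by
  obtain ⟨s, hts, hsA⟩ := ENNReal.lt_iff_exists_nnreal_btwn.1 hdim
  have hts' : t < s := (ENNReal.ofReal_lt_coe_iff ht).1 hts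
  refine ⟨s, hts', fun hzero => ENNReal.zero_ne_top ?_⟩
  rw [← hausdorffMeasure_of_lt_dimH hsA,
    hausdorffMeasure_eq_zero_of_hausdorffContent_eq_zero (ht.trans_lt hts') hzero]

theorem exists_isCompact_isGapSeparated_of_completeSpace [CompleteSpace X]
    [TopologicalSpace.SeparableSpace X] (hA : AnalyticSet A) (ht : 0 < t)
    (hdim : ENNReal.ofReal t < dimH A) :
    ∃ B ⊆ A, IsCompact B ∧ 0 < μH[t] B ∧ μH[t] B < ⊤ ∧ ∃ c, 0 < c ∧ IsGapSeparated c B := by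
  obtain ⟨s, hts, hs⟩ := exists_hausdorffContent_ne_zero_of_lt_dimH ht.le hdim
  rw [AnalyticSet] at hA
  obtain rfl | ⟨f, hf, rfl⟩ := hA
  · exact absurd measure_empty hs
  obtain ⟨v⟩ := HeavyPiece.nonempty_of_hausdorffContent_range_ne_zero (t := t) (ht.trans hts) hs
  obtain ⟨L, g, hL, hg, hg₁, T, hcarrier, hchild⟩ := HeavyPiece.exists_ballForest f ht hts
  exact ⟨T.limitSet v, HeavyPiece.limitSet_subset_range hf hcarrier hchild v,
    T.isCompact_limitSet v, T.hausdorffMeasure_limitSet_pos ht hL.le v,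
    T.hausdorffMeasure_limitSet_lt_top ht.le v, g / 3, by positivity,
    T.isGapSeparated_limitSet hg.le (by linarith) v⟩

theorem exists_isCompact_isGapSeparated (hA : AnalyticSet A) (ht : 0 < t)
    (hdim : ENNReal.ofReal t < dimH A) :
    ∃ B ⊆ A, IsCompact B ∧ 0 < μH[t] B ∧ μH[t] B < ⊤ ∧ ∃ c, 0 < c ∧ IsGapSeparated c B := by
  obtain ⟨β, _, _, f, hf, rfl⟩ := analyticSet_iff_exists_polishSpace_range.1 hA
  set A := Set.range f
  have : TopologicalSpace.SeparableSpace A :=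
    (TopologicalSpace.isSeparable_range hf).separableSpace
  let ι : A → UniformSpace.Completion A := (↑)
  have hι : Isometry ι := UniformSpace.Completion.coe_isometry
  have hval : Isometry ((↑) : A → X) := isometry_subtype_coe
  borelize (UniformSpace.Completion A)
  have hanalytic : AnalyticSet (Set.range ι) := by
    rw [← Set.rangeFactorization_surjective.range_comp ι]
    exact analyticSet_range_of_polishSpace (hι.continuous.comp hf.rangeFactorization)
  have hdimι : dimH (Set.range ι) = dimH A := by
    rw [← Set.image_univ, hι.dimH_image, ← hval.dimH_image, Set.image_univ, Subtype.range_coe]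
  obtain ⟨_, hsub, hcompact, hpos, hfin, c, hc, hgap⟩ :=
    exists_isCompact_isGapSeparated_of_completeSpace hanalytic ht (hdimι ▸ hdim)
  obtain ⟨C, rfl⟩ := Set.subset_range_iff_exists_image_eq.1 hsub
  rw [hι.hausdorffMeasure_image (.inl ht.le)] at hpos hfin
  rw [← hι.isEmbedding.isInducing.isCompact_iff] at hcompact
  refine ⟨(↑) '' C, Subtype.coe_image_subset A C, hcompact.image continuous_subtype_val, ?_, ?_,
    c, hc, ?_⟩
  · rwa [hval.hausdorffMeasure_image (.inl ht.le)]
  · rwa [hval.hausdorffMeasure_image (.inl ht.le)]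
  · exact ((hgap.preimage hι hι.injective).mono (Set.subset_preimage_image ι C)).image hval
      hval.injective

end Analytic

theorem analytic_exists_compact_subset_biLipschitz_ultrametric_general
    {X : Type*} [MetricSpace X] [MeasurableSpace X] [BorelSpace X]
    (A : Set X) (hA : MeasureTheory.AnalyticSet A)
    (t : ℝ) (ht : 0 < t)
    (hdim : ENNReal.ofReal t < dimH A) :
    ∃ B : Set X, B ⊆ A ∧ IsCompact B ∧
      0 < μH[t] B ∧ μH[t] B < ⊤ ∧
      ∃ d' : X → X → ℝ,
        (∀ x ∈ B, d' x x = 0) ∧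
        (∀ x ∈ B, ∀ y ∈ B, d' x y = d' y x) ∧
        (∀ x ∈ B, ∀ y ∈ B, x ≠ y → 0 < d' x y) ∧
        (∀ x ∈ B, ∀ y ∈ B, ∀ z ∈ B, d' x y ≤ max (d' x z) (d' z y)) ∧
        ∃ c C : ℝ, 0 < c ∧ c ≤ C ∧
          ∀ x ∈ B, ∀ y ∈ B, c * dist x y ≤ d' x y ∧ d' x y ≤ C * dist x y := by
  obtain ⟨B, hBA, hcompact, hpos, hfin, c, hc, hgap⟩ := exists_isCompact_isGapSeparated hA ht hdim
  exact ⟨B, hBA, hcompact, hpos, hfin, hgap.exists_biLipschitz_ultrametric hc⟩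

/-- Let `A` be an analytic subset of a complete separable metric space `(X,d)`
and let `k` be a positive integer with `dimH A > k`. Then there exists a compact subset
`B ⊆ A` with `0 < H^k(B) < ∞` together with a metric `d'` on `B` satisfying the ultrametric
inequality such that `d'` is bi-Lipschitz equivalent to `d` on `B`. -/
theorem analytic_exists_compact_subset_biLipschitz_ultrametric
    {X : Type*} [MetricSpace X] [CompleteSpace X] [TopologicalSpace.SeparableSpace X]
    [MeasurableSpace X] [BorelSpace X]
    (A : Set X) (hA : MeasureTheory.AnalyticSet A)
    (k : ℕ) (hk : 0 < k)
    (hdim : (k : ℝ≥0∞) < dimH A) :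
    ∃ B : Set X, B ⊆ A ∧ IsCompact B ∧
      0 < μH[(k : ℝ)] B ∧ μH[(k : ℝ)] B < ⊤ ∧
      ∃ d' : X → X → ℝ,
        (∀ x ∈ B, d' x x = 0) ∧
        (∀ x ∈ B, ∀ y ∈ B, d' x y = d' y x) ∧
        (∀ x ∈ B, ∀ y ∈ B, x ≠ y → 0 < d' x y) ∧
        (∀ x ∈ B, ∀ y ∈ B, ∀ z ∈ B, d' x y ≤ max (d' x z) (d' z y)) ∧
        ∃ c C : ℝ, 0 < c ∧ c ≤ C ∧
          ∀ x ∈ B, ∀ y ∈ B, c * dist x y ≤ d' x y ∧ d' x y ≤ C * dist x y := by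
  exact analytic_exists_compact_subset_biLipschitz_ultrametric_general A hA k (Nat.cast_pos.2 hk)
    (by rwa [ENNReal.ofReal_natCast])
end

section
/- Let (X,d) be a metric space, let ≤ be a linear order on X, and let C > 0 be a constant such that diam {x : a ≤ x ≤ b} ≤ C · d(a,b) for all a,b ∈ X with a ≤ b. Let s > 0 and let μ be a finite Borel measure on X such that μ(E) ≤ (diam E)^s for every E ⊆ X. Then the function g : X → ℝ defined by g(x) = μ({y ∈ X : y < x}) satisfies 0 ≤ g(b) − g(a) ≤ C^s · d(a,b)^s for all a ≤ b; in particular g is s-Hölder with constant C^s. -/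
open MeasureTheory
open scoped ENNReal

/-!
For `a ≤ b` the increment `g b - g a` is at most the mass of `[a, b)`, hence of `[a, b]`. The
Frostman condition bounds this mass by `(diam [a, b]) ^ s`, and monotonicity of the space bounds the
diameter by `C * dist a b`. Exchanging `a` and `b` turns the one-sided estimate into the Hölder one.
-/

lemma monotone_measureReal_Iio {X : Type*} [Preorder X] [MeasurableSpace X] {μ : Measure X}
    (hfin : ∀ x, μ (Set.Iio x) ≠ ∞) :
    Monotone fun x ↦ μ.real (Set.Iio x) :=
  fun _ b hab ↦ measureReal_mono (Set.Iio_subset_Iio hab) (hfin b)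

section LinearOrder

variable {X : Type*} [LinearOrder X]

lemma abs_sub_le_of_monotone_of_symm {f : X → ℝ} {ρ : X → X → ℝ} (hf : Monotone f)
    (hρ : ∀ x y, ρ x y = ρ y x) (h : ∀ a b, a ≤ b → f b - f a ≤ ρ a b) (x y : X) :
    |f x - f y| ≤ ρ x y := by
  rcases le_total x y with hxy | hyx
  · rw [abs_sub_comm, abs_of_nonneg (sub_nonneg.2 (hf hxy))]
    exact h x y hxy
  · rw [abs_of_nonneg (sub_nonneg.2 (hf hyx)), hρ]
    exact h y x hyx

lemma measureReal_Iio_sub_le_measureReal_Ico [MeasurableSpace X] {μ : Measure X} {a b : X}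
    (hab : a ≤ b) :
    μ.real (Set.Iio b) - μ.real (Set.Iio a) ≤ μ.real (Set.Ico a b) := by
  rw [sub_le_iff_le_add', ← Set.Iio_union_Ico_eq_Iio hab]
  exact measureReal_union_le _ _

end LinearOrder

lemma measureReal_le_rpow_of_diam_le {X : Type*} [PseudoMetricSpace X] [MeasurableSpace X]
    {μ : Measure X} {E : Set X} {s R : ℝ} (hs : 0 ≤ s)
    (hμ : μ E ≤ ENNReal.ofReal (Metric.diam E ^ s)) (hR : Metric.diam E ≤ R) :
    μ.real E ≤ R ^ s :=
  calc μ.real E ≤ Metric.diam E ^ s :=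
        ENNReal.toReal_le_of_le_ofReal (Real.rpow_nonneg Metric.diam_nonneg s) hμ
    _ ≤ R ^ s := Real.rpow_le_rpow Metric.diam_nonneg hR hs

theorem monotone_space_frostman_cdf_holder_general
    {X : Type*} [PseudoMetricSpace X] [LinearOrder X] [MeasurableSpace X]
    {C : ℝ} (hC : 0 ≤ C)
    (hmon : ∀ a b : X, a ≤ b → Metric.diam (Set.Icc a b) ≤ C * dist a b)
    {s : ℝ} (hs : 0 ≤ s) {μ : Measure X} (hfin : ∀ x, μ (Set.Iio x) ≠ ∞)
    (hμ : ∀ a b : X, a ≤ b →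
      μ (Set.Icc a b) ≤ ENNReal.ofReal (Metric.diam (Set.Icc a b) ^ s)) :
    (∀ a b : X, a ≤ b →
      0 ≤ μ.real (Set.Iio b) - μ.real (Set.Iio a) ∧
      μ.real (Set.Iio b) - μ.real (Set.Iio a) ≤ C ^ s * dist a b ^ s) ∧
    ∀ x y : X, |μ.real (Set.Iio x) - μ.real (Set.Iio y)| ≤ C ^ s * dist x y ^ s := by
  have hmono : Monotone fun x ↦ μ.real (Set.Iio x) := monotone_measureReal_Iio hfin
  have hIcc (a b : X) (hab : a ≤ b) : μ (Set.Icc a b) ≠ ∞ :=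
    ne_top_of_le_ne_top ENNReal.ofReal_ne_top (hμ a b hab)
  -- On an unbounded interval `Metric.diam` is the junk value `0` in both `hmon` and `hμ`, so the
  -- two estimates still chain.
  have hincr (a b : X) (hab : a ≤ b) :
      μ.real (Set.Iio b) - μ.real (Set.Iio a) ≤ C ^ s * dist a b ^ s :=
    calc μ.real (Set.Iio b) - μ.real (Set.Iio a)
        ≤ μ.real (Set.Ico a b) := measureReal_Iio_sub_le_measureReal_Ico hab
      _ ≤ μ.real (Set.Icc a b) := measureReal_mono Set.Ico_subset_Icc_self (hIcc a b hab)
      _ ≤ (C * dist a b) ^ s := measureReal_le_rpow_of_diam_le hs (hμ a b hab) (hmon a b hab)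
      _ = C ^ s * dist a b ^ s := Real.mul_rpow hC dist_nonneg
  exact ⟨fun a b hab ↦ ⟨sub_nonneg.2 (hmono hab), hincr a b hab⟩,
    abs_sub_le_of_monotone_of_symm hmono (fun x y ↦ by rw [dist_comm]) hincr⟩

/-- Let `(X,d)` be a metric space, `≤` a linear order on `X`, and `C > 0` a
constant such that `diam {x : a ≤ x ≤ b} ≤ C * d(a,b)` for all `a ≤ b`. Let `s > 0` and let `μ`
be a finite Borel measure on `X` such that `μ E ≤ (diam E)^s` for every `E ⊆ X`. Then the
function `g(x) = μ {y : y < x}` satisfies `0 ≤ g(b) - g(a) ≤ C^s * d(a,b)^s` for all `a ≤ b`;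
in particular `g` is `s`-Hölder with constant `C^s`. -/
theorem monotone_space_frostman_cdf_holder
    {X : Type*} [MetricSpace X] [MeasurableSpace X] [BorelSpace X]
    (r : LinearOrder X) (C : ℝ) (hC : 0 < C)
    (hmon : ∀ a b : X, r.le a b → Metric.diam {x | r.le a x ∧ r.le x b} ≤ C * dist a b)
    (s : ℝ) (hs : 0 < s)
    (μ : Measure X) [IsFiniteMeasure μ]
    (hμ : ∀ E : Set X, μ E ≤ ENNReal.ofReal (Metric.diam E ^ s)) :
    (∀ a b : X, r.le a b →
      0 ≤ (μ {y | r.lt y b}).toReal - (μ {y | r.lt y a}).toReal ∧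
      (μ {y | r.lt y b}).toReal - (μ {y | r.lt y a}).toReal ≤ C ^ s * dist a b ^ s) ∧
    ∀ x y : X,
      |(μ {z | r.lt z x}).toReal - (μ {z | r.lt z y}).toReal| ≤ C ^ s * dist x y ^ s :=
  monotone_space_frostman_cdf_holder_general hC.le hmon hs.le (fun _ ↦ measure_ne_top μ _)
    fun _ _ _ ↦ hμ _
end
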